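/- Let π be a set of primes and G a finitely generated abelian group. Let B be a ℤG-module whose underlying additive group is a Černikov ω-group for some set of primes ω, and suppose that no infinite ℤG-module quotient of B is also a ℤG-module quotient of some ℤG-module whose underlying abelian group is torsion-free of finite rank and π-spectral. If A is a ℤG-module belonging to the class 𝔠(G,π), then Ext^n_{ℤG}(A,B) is a Černikov ω-group for all n ≥ 0. -/

import Mathlib

/-!
Statement 11: Lemma 3.4 of the paper.  Ext^n_{ℤG}(A, B) is the Ext group in
the abelian category Rep ℤ G of ℤG-modules.
-/

open CategoryTheory

noncomputable section




/-- The rational circle `ℚ/ℤ`. -/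
abbrev RatCircle : Type := ℚ ⧸ AddSubgroup.zmultiples (1 : ℚ)

/-- The quasicyclic (Prüfer) `p`-group, realized as the `p`-primary part of `ℚ/ℤ`. -/
def pruferSubgroup (p : ℕ) : AddSubgroup RatCircle where
  carrier := {x | ∃ n : ℕ, (p ^ n : ℕ) • x = 0}
  zero_mem' := ⟨0, smul_zero _⟩
  add_mem' := by
    rintro a b ⟨m, hm⟩ ⟨n, hn⟩
    refine ⟨m + n, ?_⟩
    have ha : (p ^ m * p ^ n) • a = 0 := by rw [mul_comm, mul_smul, hm, smul_zero]
    have hb : (p ^ m * p ^ n) • b = 0 := by rw [mul_smul, hn, smul_zero]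
    rw [smul_add, pow_add, ha, hb, add_zero]
  neg_mem' := by
    rintro a ⟨m, hm⟩
    exact ⟨m, by rw [smul_neg, hm, neg_zero]⟩

/-- A group has a quasicyclic `p`-section if some quotient of a subgroup is
isomorphic to the Prüfer `p`-group. -/
def HasQuasicyclicSection (G : Type*) [Group G] (p : ℕ) : Prop :=
  ∃ (H : Subgroup G) (K : Subgroup H) (_ : K.Normal),
    Nonempty ((H ⧸ K) ≃* Multiplicative (pruferSubgroup p))

/-- The spectrum of a group: the set of primes `p` such that the group has a
section isomorphic to the quasicyclic `p`-group. -/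
def groupSpectrum (G : Type*) [Group G] : Set ℕ :=
  {p | p.Prime ∧ HasQuasicyclicSection G p}

/-- The spectrum of an (additive) abelian group, via `Multiplicative`. -/
abbrev addSpectrum (A : Type*) [AddGroup A] : Set ℕ :=
  groupSpectrum (Multiplicative A)

/-- An abelian group has finite rank if its torsion-free rank and all of its
`p`-ranks are finite. -/
def FiniteRankAbelian (A : Type*) [AddCommGroup A] : Prop :=
  (∃ n : ℕ, ∀ k : ℕ, (∃ f : (Fin k →₀ ℤ) →+ A, Function.Injective f) → k ≤ n) ∧
  ∀ p : ℕ, p.Prime → {a : A | (p : ℕ) • a = 0}.Finite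

/-- A group has finite rank (in the sense appropriate for abelian groups:
finite torsion-free rank and finite `p`-ranks). -/
def FiniteRankGroup (G : Type*) [Group G] : Prop :=
  (∃ n : ℕ, ∀ k : ℕ,
    (∃ f : Multiplicative (Fin k →₀ ℤ) →* G, Function.Injective f) → k ≤ n) ∧
  ∀ p : ℕ, p.Prime → {g : G | g ^ p = 1}.Finite

/-- A solvable group of finite rank: a solvable group all of whose abelian
sections have finite rank. -/
def SolvableOfFiniteRank (G : Type*) [Group G] : Prop :=
  IsSolvable G ∧
    ∀ (H : Subgroup G) (K : Subgroup H) (_ : K.Normal),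
      (∀ x y : H ⧸ K, x * y = y * x) → FiniteRankGroup (H ⧸ K)

/-- A group is virtually abelian. -/
def VirtuallyAbelian (G : Type*) [Group G] : Prop :=
  ∃ H : Subgroup G, H.index ≠ 0 ∧ ∀ x y : H, x * y = y * x

/-- A `ℤG`-module (given as an object of `Rep ℤ G`) whose underlying abelian group
is torsion-free, of finite rank, and `π`-spectral. -/
def NiceRep {G : Type} [Group G] (π : Set ℕ) (M : Rep.{0} ℤ G) : Prop :=
  (∀ g : M, g ≠ 0 → ¬IsOfFinAddOrder g) ∧ FiniteRankAbelian M ∧ addSpectrum M ⊆ π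

/-- The class `𝒰` of solvable groups of finite rank. -/
def MemClassU (G : Type) [Group G] : Prop :=
  SolvableOfFiniteRank G ∧
  ∃ (N : Subgroup G) (_ : N.Normal),
    Group.IsNilpotent N ∧
    Group.FG (G ⧸ N) ∧ VirtuallyAbelian (G ⧸ N) ∧
    ∃ (r : ℕ) (T : Fin (r + 1) → Subgroup G),
      Monotone T ∧ T 0 = ⊥ ∧
      ((T (Fin.last r) : Set G) = {g : G | g ∈ N ∧ IsOfFinOrder g}) ∧
      (∀ (i : Fin (r + 1)) (g t : G), t ∈ T i → g * t * g⁻¹ ∈ T i) ∧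
      (∀ (i : Fin r) (n t : G), n ∈ N → t ∈ T i.succ →
        n * t * n⁻¹ * t⁻¹ ∈ T i.castSucc) ∧
      (∀ i : Fin r, (T i.castSucc).relIndex (T i.succ) = 0 →
        ∃ M : Rep.{0} ℤ (G ⧸ N), NiceRep (groupSpectrum G) M ∧
          ∃ φ : M → G,
            (∀ m : M, φ m ∈ T i.succ) ∧
            (∀ m m' : M, (φ (m + m'))⁻¹ * (φ m * φ m') ∈ T i.castSucc) ∧
            (∀ t : G, t ∈ T i.succ → ∃ m : M, (φ m)⁻¹ * t ∈ T i.castSucc) ∧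
            (∀ (g : G) (m : M),
              (φ (M.ρ (QuotientGroup.mk g) m))⁻¹ * (g * φ m * g⁻¹) ∈ T i.castSucc))

/-- A Černikov abelian group: it has a subgroup of finite index that is a direct
sum of finitely many quasicyclic groups. -/
def IsCernikov (A : Type*) [AddCommGroup A] : Prop :=
  ∃ (S : AddSubgroup A) (r : ℕ) (p : Fin r → ℕ),
    S.index ≠ 0 ∧ (∀ i, (p i).Prime) ∧
    Nonempty (S ≃+ ((i : Fin r) → pruferSubgroup (p i)))

/-- A torsion `ω`-group: every element has finite order divisible only by primes
in `ω`. -/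
def IsOmegaTorsion (ω : Set ℕ) (A : Type*) [AddGroup A] : Prop :=
  ∀ a : A, IsOfFinAddOrder a ∧
    ∀ p : ℕ, p.Prime → (p : ℤ) ∣ (addOrderOf a : ℤ) → p ∈ ω

/-- A Černikov `ω`-group. -/
def IsCernikovOmega (ω : Set ℕ) (A : Type*) [AddCommGroup A] : Prop :=
  IsCernikov A ∧ IsOmegaTorsion ω A

/-- The class `𝔠(G, π)`: the smallest class of `ℤG`-modules containing every
finite `ℤG`-module and every `ℤG`-module whose underlying abelian group is
torsion-free of finite rank and `π`-spectral, and closed under forming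
`ℤG`-module quotients and extensions. -/
inductive MemC (G : Type) [Group G] (π : Set ℕ) : Rep ℤ G → Prop
  | of_finite (A : Rep ℤ G) (h : Finite (A : Type)) : MemC G π A
  | of_nice (A : Rep ℤ G) (h : NiceRep π A) : MemC G π A
  | quot (A B : Rep ℤ G) (f : A ⟶ B) (hf : Function.Surjective f.hom)
      (hA : MemC G π A) : MemC G π B
  | ext (A B C : Rep ℤ G) (f : A ⟶ B) (g : B ⟶ C)
      (hinj : Function.Injective f.hom) (hsurj : Function.Surjective g.hom)
      (hexact : ∀ b : (B : Type), g.hom b = 0 ↔ ∃ a : (A : Type), f.hom a = b)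
      (hA : MemC G π A) (hC : MemC G π C) : MemC G π B


section
/-! ### Quasicyclic groups and artinian abelian groups -/

lemma mem_pruf {p : ℕ} {x : RatCircle} : x ∈ pruferSubgroup p ↔ ∃ n : ℕ, (p ^ n : ℕ) • x = 0 :=
  Iff.rfl

/-- Divisibility of an abelian group. -/
def IsDivGrp (A : Type*) [AddCommGroup A] : Prop := ∀ m : ℕ, 0 < m → ∀ x : A, ∃ y, m • y = x

lemma baer_of_div {A : Type*} [AddCommGroup A] (h : IsDivGrp A) : Module.Baer ℤ A := by
  have hs : ∀ {n : ℤ}, n ≠ 0 → Function.Surjective (fun a : A => n • a) := by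
    intro n hn x
    obtain ⟨y, hy⟩ := h n.natAbs (Int.natAbs_pos.mpr hn) x
    rcases Int.natAbs_eq n with h' | h'
    · refine ⟨y, ?_⟩
      change n • y = x
      rw [h', natCast_zsmul, hy]
    · refine ⟨-y, ?_⟩
      change n • -y = x
      rw [h', neg_smul, smul_neg, neg_neg, natCast_zsmul, hy]
  let : DivisibleBy A ℤ := divisibleByOfSMulRightSurj A ℤ hs
  exact Module.Baer.of_divisible A

lemma ratCircle_finite {n : ℕ} (hn : 0 < n) : {u : RatCircle | n • u = 0}.Finite :=
  AddCircle.finite_torsion (1 : ℚ) hn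

lemma ratCircle_tors (x : RatCircle) : ∃ n : ℕ, 0 < n ∧ n • x = 0 := by
  induction x using QuotientAddGroup.induction_on with
  | H q =>
    refine ⟨q.den, q.den_pos, ?_⟩
    rw [← QuotientAddGroup.mk_nsmul, QuotientAddGroup.eq_zero_iff]
    refine AddSubgroup.mem_zmultiples_iff.mpr ⟨q.num, ?_⟩
    simp only [zsmul_eq_mul, mul_one, nsmul_eq_mul]
    exact (Rat.den_mul_eq_num q).symm

lemma ratCircle_div : IsDivGrp RatCircle := by
  intro m hm x
  induction x using QuotientAddGroup.induction_on with
  | H q =>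
    refine ⟨((q / m : ℚ) : RatCircle), ?_⟩
    rw [← QuotientAddGroup.mk_nsmul]
    congr 1
    have : (m : ℚ) ≠ 0 := by exact_mod_cast hm.ne'
    simp only [nsmul_eq_mul]
    field_simp

lemma ratCircle_card {n : ℕ} (hn : 0 < n) : {u : RatCircle | n • u = 0}.ncard ≤ n := by
  have : {u : RatCircle | n • u = 0} ⊆ (fun m : ℕ => (((m : ℚ) / n * 1 : ℚ) : RatCircle)) '' (Finset.range n : Set ℕ) := by
    intro u hu
    have : Fact ((0 : ℚ) < 1) := ⟨one_pos⟩
    obtain ⟨m, hm, h⟩ := (AddCircle.nsmul_eq_zero_iff (p := (1 : ℚ)) (u := u) hn).mp hu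
    exact ⟨m, by simpa using hm, h⟩
  refine (Set.ncard_le_ncard this (Set.toFinite _)).trans ?_
  refine (Set.ncard_image_le (Set.toFinite _)).trans ?_
  rw [Set.ncard_coe_finset]; simp

lemma ratCircle_cyclic {x y : RatCircle} (hxy : addOrderOf x • y = 0) :
    y ∈ AddSubgroup.zmultiples x := by
  obtain ⟨n, hn, hx⟩ := ratCircle_tors x
  have hpos : 0 < addOrderOf x := addOrderOf_pos_iff.mpr (isOfFinAddOrder_iff_nsmul_eq_zero.mpr ⟨n, hn, hx⟩)
  have hsub : (AddSubgroup.zmultiples x : Set RatCircle) ⊆ {u | addOrderOf x • u = 0} := by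
    rintro _ ⟨k, rfl⟩
    change addOrderOf x • k • x = 0
    rw [smul_comm, addOrderOf_nsmul_eq_zero, smul_zero]
  have h := Set.eq_of_subset_of_ncard_le hsub
    ((ratCircle_card hpos).trans (by
      rw [← Nat.card_coe_set_eq]
      exact (Nat.card_zmultiples x).ge)) (ratCircle_finite hpos)
  have : y ∈ {u | addOrderOf x • u = 0} := hxy
  rw [← h] at this
  exact this

/-- A subgroup of `ℚ/ℤ` not containing the Prüfer group has bounded `p`-part. -/
lemma pruf_le_or_bounded {p : ℕ} (hp : p.Prime) (H : AddSubgroup RatCircle) :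
    pruferSubgroup p ≤ H ∨ ∃ e : ℕ, ∀ x ∈ H, x ∈ pruferSubgroup p → (p ^ e : ℕ) • x = 0 := by
  by_contra! hcon
  obtain ⟨h1, h2⟩ := hcon
  apply h1
  intro y hy
  obtain ⟨n, hn⟩ := hy
  obtain ⟨x, hxH, ⟨k, hk⟩, hx⟩ := h2 n
  obtain ⟨j, hj, hjx⟩ := (Nat.dvd_prime_pow hp).mp (addOrderOf_dvd_of_nsmul_eq_zero hk)
  have hnj : n ≤ j := by
    by_contra! hlt
    apply hx
    apply addOrderOf_dvd_iff_nsmul_eq_zero.mp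
    rw [hjx]; exact pow_dvd_pow _ hlt.le
  have : y ∈ AddSubgroup.zmultiples x := by
    apply ratCircle_cyclic
    rw [hjx]
    obtain ⟨c, hc⟩ := pow_dvd_pow p hnj
    rw [hc, mul_comm, mul_smul, hn, smul_zero]
  exact (AddSubgroup.zmultiples_le_of_mem hxH) this

lemma pruf_div {p : ℕ} (hp : p.Prime) : IsDivGrp (pruferSubgroup p) := by
  rintro m hm ⟨x, n, hn⟩
  obtain ⟨z, hz⟩ := ratCircle_div m hm x
  obtain ⟨N, hN, hNz⟩ := ratCircle_tors z
  obtain ⟨a, c, hc, hac⟩ := Nat.exists_eq_pow_mul_and_not_dvd hN.ne' p hp.ne_one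
  have hcop : Nat.Coprime c (p ^ n) := (Nat.Coprime.pow_left n ((Nat.Prime.coprime_iff_not_dvd hp).mpr hc)).symm
  obtain ⟨u, hu⟩ : ∃ u : ℤ, ∃ v : ℤ, u * c + v * (p ^ n : ℕ) = 1 := by
    have := (Nat.isCoprime_iff_coprime.mpr hcop)
    exact this
  obtain ⟨v, huv⟩ := hu
  refine ⟨⟨(u * c : ℤ) • z, a, ?_⟩, ?_⟩
  · rw [mul_smul, smul_comm, natCast_zsmul, ← mul_smul (p ^ a), ← hac, hNz, smul_zero]
  · ext
    change m • (u * c : ℤ) • z = x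
    rw [smul_comm, hz]
    have h2 : (u * c + v * (p ^ n : ℕ)) • x = x := by rw [huv, one_smul]
    rw [add_smul, mul_smul v, natCast_zsmul, hn, smul_zero, add_zero] at h2
    exact h2

lemma isArtinian_of_proper_finite {A : Type*} [AddCommGroup A]
    (h : ∀ N : Submodule ℤ A, N ≠ ⊤ → (N : Set A).Finite) : IsArtinian ℤ A := by
  have hfin : ∀ (k : ℕ) (N : Submodule ℤ A), (N : Set A).Finite → (N : Set A).ncard = k → Acc (· < ·) N := by
    intro k
    induction k using Nat.strong_induction_on with
    | _ k ih =>
      intro N hN hk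
      refine Acc.intro _ fun K hK => ?_
      have hss : (K : Set A) ⊂ N := hK
      exact ih _ (hk ▸ Set.ncard_lt_ncard hss hN) K (hN.subset hss.1) rfl
  refine ⟨⟨fun N => ?_⟩⟩
  refine Acc.intro _ fun K hK => ?_
  exact hfin _ K (h K (lt_of_lt_of_le hK le_top).ne) rfl

lemma pruf_artinian {p : ℕ} (hp : p.Prime) : IsArtinian ℤ (pruferSubgroup p) := by
  apply isArtinian_of_proper_finite
  intro N hN
  let H : AddSubgroup RatCircle := N.toAddSubgroup.map (pruferSubgroup p).subtype
  rcases pruf_le_or_bounded hp H with h | ⟨e, he⟩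
  · exfalso
    apply hN
    rw [eq_top_iff]
    intro x _
    obtain ⟨y, hy, hyx⟩ := h x.2
    have : y = x := Subtype.ext hyx
    exact this ▸ hy
  · refine Set.Finite.of_finite_image (f := Subtype.val) ((ratCircle_finite (n := p ^ e) (pow_pos hp.pos e)).subset ?_) Subtype.val_injective.injOn
    rintro _ ⟨x, hx, rfl⟩
    exact he x ⟨x, hx, rfl⟩ x.2

lemma finite_of_artinian_bounded {A : Type*} [AddCommGroup A] [IsArtinian ℤ A] {m : ℕ} (hm : 0 < m)
    (h : ∀ a : A, m • a = 0) : Finite A := by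
  let : Module (ZMod m) A := AddCommGroup.zmodModule h
  have : NeZero m := ⟨hm.ne'⟩
  have : IsArtinian (ZMod m) A := by
    have : IsScalarTower ℤ (ZMod m) A := ⟨fun x y z => by
      rw [zsmul_eq_mul, mul_smul, Int.cast_smul_eq_zsmul]⟩
    exact isArtinian_of_tower ℤ inferInstance
  have hfin : Module.Finite (ZMod m) A := ((IsArtinianRing.tfae (ZMod m) A).out 2 0).mp this
  exact @Module.finite_of_finite (ZMod m) A _ _ _ _ hfin
end

section
lemma torsion_of_artinian {A : Type*} [AddCommGroup A] [IsArtinian ℤ A] (x : A) :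
    ∃ n : ℕ, 0 < n ∧ n • x = 0 := by
  by_contra! hcon
  let f : ℕ →o (Submodule ℤ A)ᵒᵈ :=
    ⟨fun k => OrderDual.toDual (Submodule.span ℤ {(2 ^ k : ℕ) • x}), by
      intro a b hab
      change Submodule.span ℤ {(2 ^ b : ℕ) • x} ≤ Submodule.span ℤ {(2 ^ a : ℕ) • x}
      rw [Submodule.span_singleton_le_iff_mem, Submodule.mem_span_singleton]
      obtain ⟨c, hc⟩ := pow_dvd_pow 2 hab
      exact ⟨c, by rw [hc, natCast_zsmul, mul_comm, mul_smul]⟩⟩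
  obtain ⟨n, hn⟩ := IsArtinian.monotone_stabilizes f
  have h1 : Submodule.span ℤ {(2 ^ n : ℕ) • x} = Submodule.span ℤ {(2 ^ (n + 1) : ℕ) • x} := hn (n + 1) (Nat.le_succ n)
  have h2 : (2 ^ n : ℕ) • x ∈ Submodule.span ℤ {(2 ^ (n + 1) : ℕ) • x} := h1 ▸ Submodule.mem_span_singleton_self _
  obtain ⟨c, hc⟩ := Submodule.mem_span_singleton.mp h2
  have h3 : (c * 2 ^ (n + 1) - 2 ^ n : ℤ) • x = 0 := by
    rw [sub_smul, mul_smul, sub_eq_zero]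
    have e1 : ((2:ℤ) ^ (n + 1)) = ((2 ^ (n + 1) : ℕ) : ℤ) := by push_cast; rfl
    have e2 : ((2:ℤ) ^ n) = ((2 ^ n : ℕ) : ℤ) := by push_cast; rfl
    rw [e1, e2, natCast_zsmul, natCast_zsmul]; exact hc
  have h4 : (c * 2 ^ (n + 1) - 2 ^ n : ℤ) ≠ 0 := by
    rw [pow_succ]
    have : (c * (2 ^ n * 2) - 2 ^ n : ℤ) = 2 ^ n * (2 * c - 1) := by ring
    rw [this]
    apply mul_ne_zero (by positivity) (by omega)
  refine hcon (c * 2 ^ (n + 1) - 2 ^ n : ℤ).natAbs (Int.natAbs_pos.mpr h4) ?_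
  rcases Int.natAbs_eq (c * 2 ^ (n + 1) - 2 ^ n : ℤ) with h' | h'
  · rw [h', natCast_zsmul] at h3; exact h3
  · rw [h', neg_smul, natCast_zsmul, neg_eq_zero] at h3; exact h3

lemma exists_prime_order {A : Type*} [AddCommGroup A] {x : A} (hx : x ≠ 0) {n : ℕ} (hn : 0 < n)
    (h : n • x = 0) : ∃ p c : ℕ, p.Prime ∧ p ∣ n ∧ c • x ≠ 0 ∧ p • c • x = 0 := by
  induction n using Nat.strong_induction_on with
  | _ n ih =>
    have hn1 : n ≠ 1 := by rintro rfl; simp at h; exact hx h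
    obtain ⟨p, hp, m, rfl⟩ := Nat.exists_prime_and_dvd hn1
    by_cases hm : m • x = 0
    · have hm0 : 0 < m := Nat.pos_of_mul_pos_left hn
      obtain ⟨q, c, h1, h2, h3⟩ := ih m (by nlinarith [hp.two_le]) hm0 hm
      exact ⟨q, c, h1, h2.mul_left _, h3⟩
    · exact ⟨p, m, hp, dvd_mul_right _ _, hm, by rw [← mul_smul]; exact h⟩

lemma order_prime {A : Type*} [AddCommGroup A] {x : A} {p : ℕ} (hp : p.Prime) (h : p • x = 0)
    (hx : x ≠ 0) : addOrderOf x = p :=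
  haveI := Fact.mk hp
  addOrderOf_eq_prime h hx

/-- A nonzero divisible torsion group has a quasicyclic direct factor. -/
lemma div_split {S : Type*} [AddCommGroup S] (hdiv : IsDivGrp S) {x : S} {p : ℕ} (hp : p.Prime)
    (hx : x ≠ 0) (hpx : p • x = 0) :
    ∃ (h : pruferSubgroup p →+ S) (ρ : S →+ pruferSubgroup p), (∀ y, ρ (h y) = y) ∧ ∃ y, h y = x := by
  obtain ⟨χ, hχ⟩ := CharacterModule.exists_character_apply_ne_zero_of_ne_zero hx
  let χ' : S →+ RatCircle := χ
  have hχ' : χ' x ≠ 0 := hχ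
  have hox : addOrderOf x = p := order_prime hp hpx hx
  have hpχ : p • χ' x = 0 := by rw [← map_nsmul, hpx, map_zero]
  have hoχ : addOrderOf (χ' x) = p := order_prime hp hpχ hχ'
  have hmem : ∀ c : AddSubgroup.zmultiples x, χ' c ∈ pruferSubgroup p := by
    rintro ⟨_, k, rfl⟩
    refine ⟨1, ?_⟩
    change _ • χ' (k • x) = 0
    rw [pow_one, map_zsmul, smul_comm, hpχ, smul_zero]
  let ψ : AddSubgroup.zmultiples x →+ pruferSubgroup p :=
    (χ'.comp (AddSubgroup.zmultiples x).subtype).codRestrict _ hmem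
  have hψ : Function.Injective ψ := by
    rw [injective_iff_map_eq_zero]
    rintro ⟨_, k, rfl⟩ hk
    have : χ' (k • x) = 0 := congrArg Subtype.val hk
    rw [map_zsmul] at this
    have h1 := addOrderOf_dvd_iff_zsmul_eq_zero.mpr this
    ext
    change k • x = 0
    apply addOrderOf_dvd_iff_zsmul_eq_zero.mp
    rw [hox, ← hoχ]; exact h1
  obtain ⟨h, hh⟩ := (baer_of_div hdiv).extension_property_addMonoidHom ψ hψ (AddSubgroup.zmultiples x).subtype
  have hxh : h (ψ ⟨x, AddSubgroup.mem_zmultiples x⟩) = x := DFunLike.congr_fun hh _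
  have hinj : Function.Injective h := by
    rw [injective_iff_map_eq_zero]
    intro y hy
    by_contra hy0
    obtain ⟨n, hn⟩ := y.2
    have hn' : (p ^ n) • y = 0 := Subtype.ext hn
    obtain ⟨q, c, hq, hqn, hc, hqc⟩ := exists_prime_order hy0 (pow_pos hp.pos n) hn'
    have hqp : q = p := (Nat.prime_dvd_prime_iff_eq hq hp).mp (hq.dvd_of_dvd_pow hqn)
    subst hqp
    have : ((c • y : pruferSubgroup q) : RatCircle) ∈ AddSubgroup.zmultiples (χ' x) := by
      apply ratCircle_cyclic
      rw [hoχ]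
      exact congrArg Subtype.val hqc
    obtain ⟨k, hk⟩ := this
    have e : c • y = k • ψ ⟨x, AddSubgroup.mem_zmultiples x⟩ := Subtype.ext hk.symm
    have : k • x = 0 := by
      rw [← hxh, ← map_zsmul, ← e, map_nsmul, hy, smul_zero]
    apply hc
    rw [e, ← map_zsmul]
    have : k • (⟨x, AddSubgroup.mem_zmultiples x⟩ : AddSubgroup.zmultiples x) = 0 := Subtype.ext this
    rw [this, map_zero]
  obtain ⟨ρ, hρ⟩ := (baer_of_div (pruf_div hp)).extension_property_addMonoidHom h hinj (AddMonoidHom.id _)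
  exact ⟨h, ρ, fun y => DFunLike.congr_fun hρ y, _, hxh⟩

def consAddEquiv {r : ℕ} (p : ℕ) (q : Fin r → ℕ) :
    (pruferSubgroup p × ((i : Fin r) → pruferSubgroup (q i))) ≃+
      ((i : Fin (r + 1)) → pruferSubgroup ((Fin.cons p q : Fin (r + 1) → ℕ) i)) where
  toFun := Fin.consEquiv (fun i => pruferSubgroup ((Fin.cons p q : Fin (r + 1) → ℕ) i))
  invFun := (Fin.consEquiv (fun i => pruferSubgroup ((Fin.cons p q : Fin (r + 1) → ℕ) i))).symm
  left_inv x := Equiv.symm_apply_apply (Fin.consEquiv (fun i => pruferSubgroup ((Fin.cons p q : Fin (r + 1) → ℕ) i))) x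
  right_inv x := Equiv.apply_symm_apply (Fin.consEquiv (fun i => pruferSubgroup ((Fin.cons p q : Fin (r + 1) → ℕ) i))) x
  map_add' x y := by
    funext i
    refine Fin.cases ?_ (fun j => ?_) i <;> rfl

lemma div_structure {A : Type*} [AddCommGroup A] [IsArtinian ℤ A] (N : Submodule ℤ A) :
    IsDivGrp N → ∃ (r : ℕ) (p : Fin r → ℕ), (∀ i, (p i).Prime) ∧
      Nonempty (N ≃+ ((i : Fin r) → pruferSubgroup (p i))) := by
  refine WellFoundedLT.induction (motive := fun N : Submodule ℤ A => IsDivGrp N → ∃ (r : ℕ) (p : Fin r → ℕ), (∀ i, (p i).Prime) ∧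
      Nonempty (N ≃+ ((i : Fin r) → pruferSubgroup (p i)))) N ?_
  intro N ih
  intro hdiv
  by_cases htriv : ∃ x : N, x ≠ 0
  · obtain ⟨x0, hx0⟩ := htriv
    obtain ⟨n, hn, hnx⟩ := torsion_of_artinian x0
    obtain ⟨p, c, hp, -, hx, hpx⟩ := exists_prime_order hx0 hn hnx
    obtain ⟨h, ρ, hρ, y, hy⟩ := div_split hdiv hp hx hpx
    let K : Submodule ℤ N := LinearMap.ker ρ.toIntLinearMap
    let N' : Submodule ℤ A := K.map N.subtype
    have hlt : N' < N := by
      refine lt_of_le_of_ne (Submodule.map_subtype_le _ _) fun heq => ?_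
      have hxN : ((c • x0 : N) : A) ∈ N' := heq.ge (c • x0).2
      obtain ⟨z, hz, hzx⟩ := hxN
      have : z = c • x0 := Subtype.ext hzx
      have h0 : ρ (c • x0) = 0 := this ▸ hz
      rw [← hy, hρ] at h0
      apply hx
      rw [← hy, h0, map_zero]
    let e : K ≃ₗ[ℤ] N' := Submodule.equivMapOfInjective N.subtype N.subtype_injective K
    have hKdiv : IsDivGrp K := by
      rintro m hm ⟨k, hk⟩
      obtain ⟨z, hz⟩ := hdiv m hm k
      refine ⟨⟨z - h (ρ z), ?_⟩, ?_⟩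
      · change ρ (z - h (ρ z)) = 0
        rw [map_sub, hρ, sub_self]
      · ext1
        change m • (z - h (ρ z)) = k
        have hk' : ρ k = 0 := hk
        rw [smul_sub, hz, ← map_nsmul, ← map_nsmul, hz, hk', map_zero, sub_zero]
    have hN'div : IsDivGrp N' := by
      intro m hm w
      obtain ⟨z, hz⟩ := hKdiv m hm (e.symm w)
      exact ⟨e z, by rw [← map_nsmul, hz, e.apply_symm_apply]⟩
    obtain ⟨r, q, hq, ⟨f⟩⟩ := ih N' hlt hN'div
    let s : N ≃+ (pruferSubgroup p × K) :=
      { toFun := fun z => (ρ z, ⟨z - h (ρ z), by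
          change ρ (z - h (ρ z)) = 0
          rw [map_sub, hρ, sub_self]⟩)
        invFun := fun w => h w.1 + w.2
        left_inv := fun z => by simp
        right_inv := fun w => by
          have hw : ρ w.2 = 0 := w.2.2
          ext1
          · simp [hρ, hw]
          · ext1
            simp [hρ, hw]
        map_add' := fun a b => by
          ext1
          · simp
          · ext1
            simp only [map_add, Prod.snd_add, Submodule.coe_add]
            abel }
    refine ⟨r + 1, Fin.cons p q, fun i => Fin.cases hp hq i, ⟨?_⟩⟩
    exact s.trans (((AddEquiv.refl _).prodCongr (e.toAddEquiv.trans f)).trans (consAddEquiv p q))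
  · push Not at htriv
    refine ⟨0, Fin.elim0, fun i => i.elim0, ⟨⟨⟨fun _ => 0, fun _ => 0, fun x => (htriv x).symm, fun x => by funext i; exact i.elim0⟩, fun x y => by funext i; exact i.elim0⟩⟩⟩

lemma isArtinian_of_finite_grp {A : Type*} [AddCommGroup A] [Finite A] : IsArtinian ℤ A :=
  inferInstance

/-- In an artinian abelian group, some `m • A` is divisible. -/
lemma exists_mul_div {A : Type*} [AddCommGroup A] [IsArtinian ℤ A] :
    ∃ m : ℕ, 0 < m ∧ ∀ k : ℕ, 0 < k → ∀ x : A, ∃ y : A, k • m • y = m • x := by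
  let f : ℕ →o (Submodule ℤ A)ᵒᵈ :=
    ⟨fun k => OrderDual.toDual (LinearMap.range (LinearMap.lsmul ℤ A (k.factorial : ℤ))), by
      intro a b hab
      change LinearMap.range (LinearMap.lsmul ℤ A (b.factorial : ℤ)) ≤ LinearMap.range (LinearMap.lsmul ℤ A (a.factorial : ℤ))
      rintro _ ⟨x, rfl⟩
      obtain ⟨c, hc⟩ := Nat.factorial_dvd_factorial hab
      refine ⟨(c : ℤ) • x, ?_⟩
      simp only [LinearMap.lsmul_apply]
      rw [← mul_smul, hc]; push_cast; rfl⟩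
  obtain ⟨n, hn⟩ := IsArtinian.monotone_stabilizes f
  refine ⟨n.factorial, n.factorial_pos, fun k hk x => ?_⟩
  have h1 : LinearMap.range (LinearMap.lsmul ℤ A (n.factorial : ℤ)) =
      LinearMap.range (LinearMap.lsmul ℤ A ((n + k * n.factorial).factorial : ℤ)) := hn _ (Nat.le_add_right _ _)
  have h2 : n.factorial • x ∈ LinearMap.range (LinearMap.lsmul ℤ A (n.factorial : ℤ)) :=
    ⟨x, by simp only [LinearMap.lsmul_apply, natCast_zsmul]⟩
  rw [h1] at h2
  obtain ⟨y, hy⟩ := h2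
  have h3 : k * n.factorial ∣ (n + k * n.factorial).factorial :=
    Nat.dvd_factorial (Nat.mul_pos hk n.factorial_pos) (Nat.le_add_left _ _)
  obtain ⟨c, hc⟩ := h3
  refine ⟨c • y, ?_⟩
  rw [← hy]
  simp only [LinearMap.lsmul_apply, natCast_zsmul]
  rw [hc, ← mul_smul, ← mul_smul]

lemma isCernikov_iff {A : Type*} [AddCommGroup A] : IsCernikov A ↔ IsArtinian ℤ A := by
  constructor
  · rintro ⟨S, r, p, hS, hp, ⟨e⟩⟩
    have h1 : ∀ i, IsArtinian ℤ (pruferSubgroup (p i)) := fun i => pruf_artinian (hp i)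
    have h2 : IsArtinian ℤ (∀ i, pruferSubgroup (p i)) := inferInstance
    have h3 : IsArtinian ℤ (AddSubgroup.toIntSubmodule S) :=
      isArtinian_of_injective (e.toAddMonoidHom.toIntLinearMap : S →ₗ[ℤ] _) e.injective
    have : S.FiniteIndex := ⟨hS⟩
    have h4 : Finite (A ⧸ S) := AddSubgroup.finite_quotient_of_finiteIndex (H := S)
    have h5 : Finite (A ⧸ (AddSubgroup.toIntSubmodule S)) := h4
    exact isArtinian_iff_submodule_quotient (AddSubgroup.toIntSubmodule S) |>.mpr ⟨h3, inferInstance⟩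
  · intro h
    obtain ⟨m, hm, hdiv⟩ := exists_mul_div (A := A)
    let N : Submodule ℤ A := LinearMap.range (LinearMap.lsmul ℤ A (m : ℤ))
    have hN : IsDivGrp N := by
      rintro k hk ⟨_, x, rfl⟩
      obtain ⟨y, hy⟩ := hdiv k hk x
      refine ⟨⟨(m : ℤ) • y, y, rfl⟩, ?_⟩
      ext1
      change k • (m : ℤ) • y = (m : ℤ) • x
      simpa only [natCast_zsmul] using hy
    obtain ⟨r, p, hp, e⟩ := div_structure N hN
    refine ⟨N.toAddSubgroup, r, p, ?_, hp, e⟩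
    have : Finite (A ⧸ N) := by
      apply finite_of_artinian_bounded hm
      intro a
      induction a using Submodule.Quotient.induction_on with
      | H a =>
        rw [← Submodule.Quotient.mk_smul, Submodule.Quotient.mk_eq_zero]
        exact ⟨a, by simp only [LinearMap.lsmul_apply, natCast_zsmul]⟩
    have : Finite (A ⧸ N.toAddSubgroup) := this
    exact (AddSubgroup.finiteIndex_of_finite_quotient (H := N.toAddSubgroup)).index_ne_zero
end

section
/-! ### Torsion-free groups of finite rank -/

/-- `A` has a character whose image contains the Prüfer group. -/
def HasChar (p : ℕ) (A : Type*) [AddCommGroup A] : Prop :=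
  ∃ f : A →+ RatCircle, pruferSubgroup p ≤ f.range

lemma ext_char {A B : Type*} [AddCommGroup A] [AddCommGroup B] (i : A →+ B) (hi : Function.Injective i)
    (f : A →+ RatCircle) : ∃ g : B →+ RatCircle, ∀ a, g (i a) = f a := by
  obtain ⟨g, hg⟩ := (baer_of_div ratCircle_div).extension_property_addMonoidHom i hi f
  exact ⟨g, fun a => DFunLike.congr_fun hg a⟩

lemma section_iff {A : Type*} [AddCommGroup A] (p : ℕ) :
    HasQuasicyclicSection (Multiplicative A) p ↔ HasChar p A := by
  constructor
  · rintro ⟨H, K, hK, ⟨e⟩⟩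
    let H' : AddSubgroup A := Subgroup.toAddSubgroup' H
    let f0 : H →* Multiplicative (pruferSubgroup p) := e.toMonoidHom.comp (QuotientGroup.mk' K)
    have hf0 : Function.Surjective f0 := e.surjective.comp (QuotientGroup.mk'_surjective K)
    let f1 : H' →+ RatCircle :=
      { toFun := fun x => ((f0 ⟨Multiplicative.ofAdd x.1, x.2⟩).toAdd : pruferSubgroup p)
        map_zero' := by
          have : f0 ⟨Multiplicative.ofAdd (0 : A), H.one_mem⟩ = 1 := map_one f0
          exact congrArg (fun z => ((Multiplicative.toAdd z : pruferSubgroup p) : RatCircle)) this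
        map_add' := fun x y => by
          have := map_mul f0 ⟨Multiplicative.ofAdd x.1, x.2⟩ ⟨Multiplicative.ofAdd y.1, y.2⟩
          exact congrArg (fun z => ((Multiplicative.toAdd z : pruferSubgroup p) : RatCircle)) this }
    obtain ⟨g, hg⟩ := ext_char H'.subtype H'.subtype_injective f1
    refine ⟨g, fun x hx => ?_⟩
    obtain ⟨y, hy⟩ := hf0 (Multiplicative.ofAdd ⟨x, hx⟩)
    refine ⟨(y : Multiplicative A).toAdd, ?_⟩
    refine (hg ⟨(y : Multiplicative A).toAdd, y.2⟩).trans ?_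
    exact congrArg (fun z => ((Multiplicative.toAdd z : pruferSubgroup p) : RatCircle)) hy
  · rintro ⟨f, hf⟩
    let H' : AddSubgroup A := (pruferSubgroup p).comap f
    let H : Subgroup (Multiplicative A) := AddSubgroup.toSubgroup H'
    let f0 : H →* Multiplicative (pruferSubgroup p) :=
      { toFun := fun x => Multiplicative.ofAdd ⟨f x.1.toAdd, x.2⟩
        map_one' := by
          apply Multiplicative.toAdd.injective
          apply Subtype.ext
          exact map_zero f
        map_mul' := fun x y => by
          apply Multiplicative.toAdd.injective
          apply Subtype.ext
          exact map_add f _ _ }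
    have hf0 : Function.Surjective f0 := by
      intro y
      obtain ⟨a, ha⟩ := hf y.toAdd.2
      refine ⟨⟨Multiplicative.ofAdd a, ?_⟩, ?_⟩
      · change f a ∈ pruferSubgroup p
        rw [ha]; exact y.toAdd.2
      · apply Multiplicative.toAdd.injective
        apply Subtype.ext
        exact ha
    exact ⟨H, f0.ker, inferInstance, ⟨QuotientGroup.quotientKerEquivOfSurjective f0 hf0⟩⟩

lemma mem_addSpectrum {A : Type*} [AddCommGroup A] (p : ℕ) :
    p ∈ addSpectrum A ↔ p.Prime ∧ HasChar p A := by
  rw [← section_iff]; rfl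

lemma HasChar.of_surj {p : ℕ} {A B : Type*} [AddCommGroup A] [AddCommGroup B] (f : A →+ B)
    (hf : Function.Surjective f) (h : HasChar p B) : HasChar p A := by
  obtain ⟨g, hg⟩ := h
  refine ⟨g.comp f, fun x hx => ?_⟩
  obtain ⟨b, hb⟩ := hg hx
  obtain ⟨a, rfl⟩ := hf b
  exact ⟨a, hb⟩

lemma HasChar.of_inj {p : ℕ} {A B : Type*} [AddCommGroup A] [AddCommGroup B] (f : A →+ B)
    (hf : Function.Injective f) (h : HasChar p A) : HasChar p B := by
  obtain ⟨g, hg⟩ := h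
  obtain ⟨g', hg'⟩ := ext_char f hf g
  refine ⟨g', fun x hx => ?_⟩
  obtain ⟨a, ha⟩ := hg hx
  exact ⟨f a, by rw [hg', ha]⟩

lemma cop_mem {H : AddSubgroup RatCircle} {x : RatCircle} {n c : ℕ} (hn : n • x = 0)
    (hc : Nat.Coprime c n) (h : c • x ∈ H) : x ∈ H := by
  obtain ⟨u, v, huv⟩ : ∃ u : ℤ, ∃ v : ℤ, u * c + v * n = 1 := Nat.isCoprime_iff_coprime.mpr hc
  have h2 : (u * c + v * n) • x = x := by rw [huv, one_smul]
  rw [add_smul, mul_smul v, natCast_zsmul, hn, smul_zero, add_zero, mul_smul, natCast_zsmul] at h2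
  rw [← h2]
  exact H.zsmul_mem h _

lemma pruf_sup {p : ℕ} (hp : p.Prime) {H K : AddSubgroup RatCircle} (h : pruferSubgroup p ≤ H ⊔ K) :
    pruferSubgroup p ≤ H ∨ pruferSubgroup p ≤ K := by
  by_contra! hcon
  obtain ⟨e, he⟩ := (pruf_le_or_bounded hp H).resolve_left hcon.1
  obtain ⟨e', he'⟩ := (pruf_le_or_bounded hp K).resolve_left hcon.2
  apply hcon.1
  have key : ∀ z ∈ pruferSubgroup p, (p ^ (e + e') : ℕ) • z = 0 := by
    intro z hz
    obtain ⟨x, hx, y, hy, rfl⟩ := AddSubgroup.mem_sup.mp (h hz)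
    obtain ⟨n, hn⟩ := hz
    obtain ⟨a, ha0, ha⟩ := ratCircle_tors x
    obtain ⟨b, hb0, hb⟩ := ratCircle_tors y
    obtain ⟨i, c, hc, rfl⟩ := Nat.exists_eq_pow_mul_and_not_dvd ha0.ne' p hp.ne_one
    obtain ⟨j, d, hd, rfl⟩ := Nat.exists_eq_pow_mul_and_not_dvd hb0.ne' p hp.ne_one
    have h1 : (p ^ e) • (c * d) • x = 0 := he _ (H.nsmul_mem hx _) ⟨i, by
      rw [← mul_smul, ← mul_assoc, mul_comm _ d, mul_smul, ha, smul_zero]⟩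
    have h2 : (p ^ e') • (c * d) • y = 0 := he' _ (K.nsmul_mem hy _) ⟨j, by
      rw [mul_comm c d, ← mul_smul, ← mul_assoc, mul_comm _ c, mul_smul, hb, smul_zero]⟩
    have h3 : (c * d) • (p ^ (e + e')) • (x + y) = 0 := by
      rw [smul_comm, smul_add, smul_add, pow_add, mul_smul _ _ ((c * d) • y), h2, mul_comm, mul_smul, h1]
      simp
    have hcop : Nat.Coprime (c * d) (p ^ n) := by
      apply Nat.Coprime.pow_right
      exact (Nat.Coprime.mul_right ((Nat.Prime.coprime_iff_not_dvd hp).mpr hc) ((Nat.Prime.coprime_iff_not_dvd hp).mpr hd)).symm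
    have := cop_mem (H := ⊥) (x := (p ^ (e + e')) • (x + y)) (n := p ^ n) (by rw [smul_comm, hn, smul_zero]) hcop h3
    exact this
  intro z hz
  obtain ⟨w, hw⟩ := pruf_div hp (p ^ (e + e')) (pow_pos hp.pos _) ⟨z, hz⟩
  have : z = 0 := by
    have h1 : (p ^ (e + e')) • (w : RatCircle) = z := congrArg Subtype.val hw
    rw [← h1, key _ w.2]
  rw [this]; exact H.zero_mem

lemma pruf_finset_sup {ι : Type*} {p : ℕ} (hp : p.Prime) (s : Finset ι) (H : ι → AddSubgroup RatCircle)
    (h : pruferSubgroup p ≤ s.sup H) : ∃ i, pruferSubgroup p ≤ H i := by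
  classical
  induction s using Finset.induction_on with
  | empty =>
    exfalso
    simp only [Finset.sup_empty] at h
    obtain ⟨x, hx⟩ : ∃ x : RatCircle, x ∈ pruferSubgroup p ∧ x ≠ 0 := by
      refine ⟨((1 / p : ℚ) : RatCircle), ⟨1, ?_⟩, ?_⟩
      · rw [← QuotientAddGroup.mk_nsmul, QuotientAddGroup.eq_zero_iff]
        refine AddSubgroup.mem_zmultiples_iff.mpr ⟨1, ?_⟩
        have : (p : ℚ) ≠ 0 := by exact_mod_cast hp.ne_zero
        simp only [one_smul, pow_one, nsmul_eq_mul]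
        field_simp
      · rw [Ne, QuotientAddGroup.eq_zero_iff, AddSubgroup.mem_zmultiples_iff]
        rintro ⟨k, hk⟩
        have h0 : (p : ℚ) ≠ 0 := by exact_mod_cast hp.ne_zero
        rw [zsmul_eq_mul, mul_one, eq_div_iff h0] at hk
        have hk' : k * (p : ℤ) = 1 := by exact_mod_cast hk
        have h1 : (p : ℤ) ∣ 1 := ⟨k, by rw [mul_comm, hk']⟩
        have h2 : p ∣ 1 := by exact_mod_cast h1
        exact hp.one_lt.ne' (Nat.dvd_one.mp h2)
    exact hx.2 (h hx.1)
  | insert a s ha ih =>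
    rw [Finset.sup_insert] at h
    rcases pruf_sup hp h with h | h
    · exact ⟨a, h⟩
    · exact ih h

lemma HasChar.of_pi {p : ℕ} (hp : p.Prime) {ι : Type*} [Finite ι] {A : Type*} [AddCommGroup A]
    (h : HasChar p (ι → A)) : HasChar p A := by
  classical
  have := Fintype.ofFinite ι
  obtain ⟨f, hf⟩ := h
  have : pruferSubgroup p ≤ Finset.univ.sup (fun i => (f.comp (AddMonoidHom.single (fun _ : ι => A) i)).range) := by
    refine hf.trans ?_
    rintro _ ⟨x, rfl⟩
    rw [← Finset.univ_sum_single x, map_sum]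
    refine AddSubgroup.sum_mem _ fun i _ => ?_
    have hle : (f.comp (AddMonoidHom.single (fun _ : ι => A) i)).range ≤ Finset.univ.sup (fun i => (f.comp (AddMonoidHom.single (fun _ : ι => A) i)).range) :=
      Finset.le_sup (f := fun i => (f.comp (AddMonoidHom.single (fun _ : ι => A) i)).range) (Finset.mem_univ i)
    exact hle ⟨x i, rfl⟩
  obtain ⟨i, hi⟩ := pruf_finset_sup hp _ _ this
  exact ⟨_, hi⟩
end

section
/-- Torsion-free abelian groups of finite rank that are `π`-spectral, in convenient form. -/
def NiceGrp (π : Set ℕ) (A : Type*) [AddCommGroup A] : Prop :=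
  (∃ (k : ℕ) (j : A →+ (Fin k → ℚ)), Function.Injective j) ∧ ∀ p : ℕ, p.Prime → HasChar p A → p ∈ π

lemma ratpow_tf {k : ℕ} {n : ℕ} (hn : 0 < n) {x : Fin k → ℚ} (h : n • x = 0) : x = 0 := by
  have h' : (n : ℚ) • x = 0 := by rw [← h, Nat.cast_smul_eq_nsmul]
  rcases smul_eq_zero.mp h' with h | h
  · exact absurd h (by exact_mod_cast hn.ne')
  · exact h

lemma emb_tf {A : Type*} [AddCommGroup A] {k : ℕ} {j : A →+ (Fin k → ℚ)} (hj : Function.Injective j)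
    {n : ℕ} (hn : 0 < n) {a : A} (h : n • a = 0) : a = 0 := by
  apply hj
  rw [map_zero]
  apply ratpow_tf hn
  rw [← map_nsmul, h, map_zero]

lemma emb_rank {A : Type*} [AddCommGroup A] {k : ℕ} {j : A →+ (Fin k → ℚ)} (hj : Function.Injective j)
    {ι : Type*} [Fintype ι] {v : ι → A} (hv : LinearIndependent ℤ v) : Fintype.card ι ≤ k := by
  have h1 : LinearIndependent ℤ (j.toIntLinearMap ∘ v) :=
    hv.map' _ (LinearMap.ker_eq_bot.mpr hj)
  have h2 : LinearIndependent ℚ (j.toIntLinearMap ∘ v) := (LinearIndependent.iff_fractionRing ℤ ℚ).mp h1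
  simpa using h2.fintype_card_le_finrank

lemma exists_maximal_indep {A : Type*} [AddCommGroup A] {n : ℕ}
    (h : ∀ k (v : Fin k → A), LinearIndependent ℤ v → k ≤ n) :
    ∃ (k : ℕ) (v : Fin k → A), LinearIndependent ℤ v ∧ ∀ a : A, ∃ m : ℤ, m ≠ 0 ∧ m • a ∈ Submodule.span ℤ (Set.range v) := by
  classical
  let P : ℕ → Prop := fun k => ∃ v : Fin k → A, LinearIndependent ℤ v
  have hP0 : P 0 := ⟨Fin.elim0, linearIndependent_empty_type⟩
  have hP : P (Nat.findGreatest P n) := Nat.findGreatest_spec (Nat.zero_le n) hP0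
  obtain ⟨v, hv⟩ := hP
  refine ⟨_, v, hv, fun a => ?_⟩
  by_contra! hcon
  have h1 : P (Nat.findGreatest P n + 1) := by
    refine ⟨Fin.cons a v, LinearIndependent.fin_cons' a v hv ?_⟩
    intro c y hy hc
    by_contra hc0
    apply hcon c hc0
    rw [eq_neg_of_add_eq_zero_left hc]
    exact Submodule.neg_mem _ hy
  have h2 : Nat.findGreatest P n + 1 ≤ n := h _ h1.choose h1.choose_spec
  have := Nat.le_findGreatest h2 h1
  omega

lemma extend_emb {W M : Type*} [AddCommGroup W] [AddCommGroup M] (i : W →+ M) (hi : Function.Injective i)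
    (htf : ∀ (n : ℕ), 0 < n → ∀ a : M, n • a = 0 → a = 0)
    (htor : ∀ a : M, ∃ n : ℕ, 0 < n ∧ ∃ w, i w = n • a) {k : ℕ} (j : W →+ (Fin k → ℚ)) (hj : Function.Injective j) :
    ∃ j' : M →+ (Fin k → ℚ), Function.Injective j' := by
  have hdiv : IsDivGrp (Fin k → ℚ) := by
    intro m hm x
    refine ⟨(m : ℚ)⁻¹ • x, ?_⟩
    have : (m : ℚ) ≠ 0 := by exact_mod_cast hm.ne'
    rw [← Nat.cast_smul_eq_nsmul ℚ, smul_smul, mul_inv_cancel₀ this, one_smul]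
  obtain ⟨g, hg⟩ := (baer_of_div hdiv).extension_property_addMonoidHom i hi j
  refine ⟨g, (injective_iff_map_eq_zero g).mpr fun a ha => ?_⟩
  obtain ⟨n, hn, w, hw⟩ := htor a
  apply htf n hn
  have h1 : j w = g (i w) := (DFunLike.congr_fun hg w).symm
  rw [hw, map_nsmul, ha, smul_zero] at h1
  have : w = 0 := hj (by rw [h1, map_zero])
  rw [← hw, this, map_zero]

lemma int_to_nat_tors {M : Type*} [AddCommGroup M] {S : AddSubgroup M} {m : ℤ} (hm : m ≠ 0) {a : M} (h : m • a ∈ S) :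
    0 < m.natAbs ∧ m.natAbs • a ∈ S := by
  refine ⟨Int.natAbs_pos.mpr hm, ?_⟩
  rcases Int.natAbs_eq m with h' | h'
  · rw [h', natCast_zsmul] at h; exact h
  · rw [h', neg_smul, natCast_zsmul] at h; exact neg_mem_iff.mp h

lemma niceGrp_iff {π : Set ℕ} {A : Type} [AddCommGroup A] : NiceGrp π A ↔
    ((∀ g : A, g ≠ 0 → ¬IsOfFinAddOrder g) ∧ FiniteRankAbelian A ∧ addSpectrum A ⊆ π) := by
  have hspec : (∀ p : ℕ, p.Prime → HasChar p A → p ∈ π) ↔ addSpectrum A ⊆ π := by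
    constructor
    · intro h p hp
      rw [mem_addSpectrum] at hp
      exact h p hp.1 hp.2
    · intro h p hp hc
      exact h ((mem_addSpectrum p).mpr ⟨hp, hc⟩)
  unfold NiceGrp
  rw [hspec, ← and_assoc]
  refine and_congr_left fun _ => ?_
  constructor
  · rintro ⟨k, j, hj⟩
    have htf : ∀ (n : ℕ), 0 < n → ∀ a : A, n • a = 0 → a = 0 := fun n hn a ha => emb_tf hj hn ha
    refine ⟨fun g hg hfin => ?_, ⟨k, fun m hm => ?_⟩, fun p hp => ?_⟩
    · obtain ⟨n, hn, h⟩ := isOfFinAddOrder_iff_nsmul_eq_zero.mp hfin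
      exact hg (htf n hn g h)
    · obtain ⟨f, hf⟩ := hm
      have h1 : LinearIndependent ℤ (fun i : Fin m => Finsupp.single i (1 : ℤ)) := by
        have := (Finsupp.basisSingleOne (R := ℤ) (ι := Fin m)).linearIndependent
        simpa [Finsupp.coe_basisSingleOne] using this
      have h2 := h1.map' f.toIntLinearMap (LinearMap.ker_eq_bot.mpr hf)
      simpa using emb_rank hj h2
    · refine (Set.finite_singleton (0 : A)).subset fun a ha => ?_
      exact htf p hp.pos a ha
  · rintro ⟨h1, ⟨n, hn⟩, -⟩
    have htf : ∀ (n : ℕ), 0 < n → ∀ a : A, n • a = 0 → a = 0 := fun n hn a ha => by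
      by_contra h0
      exact h1 a h0 (isOfFinAddOrder_iff_nsmul_eq_zero.mpr ⟨n, hn, ha⟩)
    obtain ⟨k, v, hv, hmax⟩ := exists_maximal_indep (A := A) (n := n) (fun k v hv =>
      hn k ⟨(Finsupp.linearCombination ℤ v).toAddMonoidHom, hv⟩)
    refine ⟨k, ?_⟩
    let i : (Fin k →₀ ℤ) →+ A := (Finsupp.linearCombination ℤ v).toAddMonoidHom
    let j : (Fin k →₀ ℤ) →+ (Fin k → ℚ) :=
      { toFun := fun x l => (x l : ℚ)
        map_zero' := by funext l; simp
        map_add' := fun x y => by funext l; simp }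
    refine extend_emb i hv htf ?_ j ?_
    · intro a
      obtain ⟨m, hm0, hm⟩ := hmax a
      obtain ⟨h3, h4⟩ := int_to_nat_tors (S := (Submodule.span ℤ (Set.range v)).toAddSubgroup) hm0 hm
      refine ⟨_, h3, ?_⟩
      exact (Finsupp.mem_span_range_iff_exists_finsupp.mp h4)
    · intro x y hxy
      ext l
      have : ((x l : ℤ) : ℚ) = ((y l : ℤ) : ℚ) := congrFun hxy l
      exact_mod_cast this

lemma NiceGrp.of_inj {π : Set ℕ} {A B : Type*} [AddCommGroup A] [AddCommGroup B] (f : A →+ B)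
    (hf : Function.Injective f) (h : NiceGrp π B) : NiceGrp π A := by
  obtain ⟨⟨k, j, hj⟩, hs⟩ := h
  exact ⟨⟨k, j.comp f, hj.comp hf⟩, fun p hp hc => hs p hp (hc.of_inj f hf)⟩

lemma NiceGrp.tf {π : Set ℕ} {A : Type*} [AddCommGroup A] (h : NiceGrp π A) {n : ℕ} (hn : 0 < n) {a : A}
    (ha : n • a = 0) : a = 0 := by
  obtain ⟨⟨k, j, hj⟩, -⟩ := h
  exact emb_tf hj hn ha

lemma NiceGrp.pi {π : Set ℕ} {ι : Type*} [Finite ι] {A : Type*} [AddCommGroup A] (h : NiceGrp π A) :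
    NiceGrp π (ι → A) := by
  have := Fintype.ofFinite ι
  obtain ⟨⟨k, j, hj⟩, hs⟩ := h
  refine ⟨?_, fun p hp hc => hs p hp (hc.of_pi hp)⟩
  let e : ι × Fin k ≃ Fin (Fintype.card (ι × Fin k)) := Fintype.equivFin _
  refine ⟨Fintype.card (ι × Fin k),
    { toFun := fun x l => j (x (e.symm l).1) (e.symm l).2
      map_zero' := by funext l; simp
      map_add' := fun x y => by funext l; simp }, ?_⟩
  intro x y hxy
  funext i
  apply hj
  funext l
  have := congrFun hxy (e (i, l))
  simpa using this

lemma NiceGrp.of_power {π : Set ℕ} {W M : Type*} [AddCommGroup W] [AddCommGroup M] (i : W →+ M)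
    (hi : Function.Injective i) (htf : ∀ (n : ℕ), 0 < n → ∀ a : M, n • a = 0 → a = 0)
    {N : ℕ} (hN0 : 0 < N) (hN : ∀ p, p.Prime → p ∣ N → p ∈ π)
    (htor : ∀ a : M, ∃ n : ℕ, ∃ w, i w = N ^ n • a) (h : NiceGrp π W) : NiceGrp π M := by
  obtain ⟨⟨k, j, hj⟩, hs⟩ := h
  refine ⟨⟨k, extend_emb i hi htf (fun a => ?_) j hj⟩, fun p hp hc => ?_⟩
  · obtain ⟨n, w, hw⟩ := htor a
    exact ⟨N ^ n, pow_pos hN0 n, w, hw⟩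
  · by_cases hpN : p ∣ N
    · exact hN p hp hpN
    · apply hs p hp
      obtain ⟨f, hf⟩ := hc
      refine ⟨f.comp i, fun x hx => ?_⟩
      obtain ⟨a, ha⟩ := hf hx
      obtain ⟨n, hn⟩ := hx
      obtain ⟨l, w, hw⟩ := htor a
      refine cop_mem (c := N ^ l) hn ?_ ⟨w, ?_⟩
      · exact Nat.Coprime.pow l n ((Nat.Prime.coprime_iff_not_dvd hp).mpr hpN).symm
      · change f (i w) = _
        rw [hw, map_nsmul, ha]

lemma finite_of_rank_le_nat {K V : Type*} [Field K] [AddCommGroup V] [Module K V] {k : ℕ}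
    (h : Module.rank K V ≤ k) : Module.Finite K V :=
  Module.rank_lt_aleph0_iff.mp (h.trans_lt (Cardinal.natCast_lt_aleph0))

/-- Finiteness of `A / m A`. -/
lemma emb_fin_prime {A : Type*} [AddCommGroup A] {k : ℕ} {j : A →+ (Fin k → ℚ)} (hj : Function.Injective j)
    {p : ℕ} (hp : p.Prime) : ∃ F : Set A, F.Finite ∧ ∀ a, ∃ f ∈ F, ∃ b, a = f + p • b := by
  have := Fact.mk hp
  let S : AddSubgroup A := (nsmulAddMonoidHom (α := A) p).range
  let Q := A ⧸ S
  have hQ : ∀ q : Q, p • q = 0 := by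
    intro q
    induction q using QuotientAddGroup.induction_on with
    | H a =>
      rw [← QuotientAddGroup.mk_nsmul, QuotientAddGroup.eq_zero_iff]
      exact ⟨a, rfl⟩
  let : Module (ZMod p) Q := AddCommGroup.zmodModule hQ
  have hli : ∀ {ι : Type _} [Fintype ι] (v : ι → A), LinearIndependent (ZMod p) (fun i => (v i : Q)) → LinearIndependent ℤ v := by
    intro ι _ v hv
    rw [Fintype.linearIndependent_iff] at hv ⊢
    have hstep : ∀ g : ι → ℤ, ∑ i, g i • v i = 0 → ∃ g' : ι → ℤ, (∑ i, g' i • v i = 0) ∧ ∀ i, g i = p * g' i := by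
      intro g hg
      have h1 : ∑ i, ((g i : ZMod p)) • (v i : Q) = 0 := by
        have := congrArg (QuotientAddGroup.mk' S) hg
        rw [map_sum, map_zero] at this
        rw [← this]
        refine Finset.sum_congr rfl fun i _ => ?_
        rw [Int.cast_smul_eq_zsmul, map_zsmul]; rfl
      have h2 := hv _ h1
      have h3 : ∀ i, (p : ℤ) ∣ g i := fun i => (ZMod.intCast_zmod_eq_zero_iff_dvd _ _).mp (h2 i)
      choose g' hg' using h3
      refine ⟨g', ?_, hg'⟩
      apply emb_tf hj hp.pos
      rw [Finset.smul_sum, ← hg]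
      refine Finset.sum_congr rfl fun i _ => ?_
      rw [hg' i, mul_smul, natCast_zsmul]
    have hpow : ∀ n : ℕ, ∀ g : ι → ℤ, ∑ i, g i • v i = 0 → ∀ i, (p : ℤ) ^ n ∣ g i := by
      intro n
      induction n with
      | zero => intro g _ i; simp
      | succ n ih =>
        intro g hg i
        obtain ⟨g', h1, h2⟩ := hstep g hg
        rw [h2 i, pow_succ']
        exact mul_dvd_mul_left _ (ih g' h1 i)
    intro g hg i
    by_contra hne
    obtain ⟨n, hn⟩ := (FiniteMultiplicity.def).mp (Int.finiteMultiplicity_iff (a := (p : ℤ)) (b := g i) |>.mpr ⟨by simpa using hp.ne_one, hne⟩)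
    exact hn (hpow _ g hg i)
  have hrank : Module.rank (ZMod p) Q ≤ k := by
    apply rank_le
    intro s hs
    have := hli (fun i : s => (i : Q).out) (by simpa using hs)
    simpa using emb_rank hj this
  have hfd : Module.Finite (ZMod p) Q := finite_of_rank_le_nat hrank
  have hfin : Finite Q := @Module.finite_of_finite (ZMod p) Q _ _ _ _ hfd
  refine ⟨Set.range (fun q : Q => q.out), Set.finite_range _, fun a => ⟨_, ⟨(a : Q), rfl⟩, ?_⟩⟩
  have : -((a : Q).out) + a ∈ S := QuotientAddGroup.eq.mp (by simp)
  obtain ⟨b, hb⟩ := this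
  refine ⟨b, ?_⟩
  change p • b = _ at hb
  rw [hb]; abel

lemma emb_fin {A : Type*} [AddCommGroup A] {k : ℕ} {j : A →+ (Fin k → ℚ)} (hj : Function.Injective j)
    (m : ℕ) : 0 < m → ∃ F : Set A, F.Finite ∧ ∀ a, ∃ f ∈ F, ∃ b, a = f + m • b := by
  induction m using Nat.recOnMul with
  | zero => intro h; omega
  | one => exact fun _ => ⟨{0}, Set.finite_singleton _, fun a => ⟨0, rfl, a, by simp⟩⟩
  | prime p hp => exact fun _ => emb_fin_prime hj hp
  | mul a b iha ihb =>
    intro hab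
    obtain ⟨F, hF, h1⟩ := iha (Nat.pos_of_mul_pos_right hab)
    obtain ⟨F', hF', h2⟩ := ihb (Nat.pos_of_mul_pos_left hab)
    refine ⟨Set.image2 (fun x y => x + a • y) F F', Set.Finite.image2 _ hF hF', fun x => ?_⟩
    obtain ⟨f, hf, y, rfl⟩ := h1 x
    obtain ⟨f', hf', z, rfl⟩ := h2 y
    exact ⟨_, ⟨f, hf, f', hf', rfl⟩, z, by rw [smul_add, mul_smul, add_assoc]⟩

lemma tors_part_finite {T : Type*} [AddCommGroup T] {p : ℕ} (hp : p.Prime)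
    (hfin : {t : T | p • t = 0}.Finite) (hc : ¬ HasChar p T) : {t : T | ∃ n : ℕ, p ^ n • t = 0}.Finite := by
  have h1 : ∀ t : T, ∃ χ : T →+ RatCircle, t ≠ 0 → χ t ≠ 0 := by
    intro t
    by_cases ht : t = 0
    · exact ⟨0, fun h => absurd ht h⟩
    · obtain ⟨χ, hχ⟩ := CharacterModule.exists_character_apply_ne_zero_of_ne_zero ht
      exact ⟨χ, fun _ => hχ⟩
  choose χ hχ using h1
  have h2 : ∀ t : T, ∃ e : ℕ, ∀ x ∈ (χ t).range, x ∈ pruferSubgroup p → (p ^ e : ℕ) • x = 0 := fun t =>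
    (pruf_le_or_bounded hp (χ t).range).resolve_left fun h => hc ⟨_, h⟩
  choose e he using h2
  have := hfin.to_subtype
  let Φ : T → ({t : T | p • t = 0} → RatCircle) := fun x t => χ t x
  have hinj : Set.InjOn Φ {t : T | ∃ n : ℕ, p ^ n • t = 0} := by
    rintro x ⟨a, ha⟩ y ⟨b, hb⟩ hxy
    by_contra hne
    have hne' : x - y ≠ 0 := sub_ne_zero.mpr hne
    have h0 : p ^ (a + b) • (x - y) = 0 := by
      rw [smul_sub, pow_add, mul_smul _ _ y, hb, mul_comm, mul_smul, ha]; simp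
    obtain ⟨q, c, hq, hqn, hcx, hqc⟩ := exists_prime_order hne' (pow_pos hp.pos _) h0
    have hqp : q = p := (Nat.prime_dvd_prime_iff_eq hq hp).mp (hq.dvd_of_dvd_pow hqn)
    subst hqp
    apply hχ _ hcx
    have h3 := congrFun hxy ⟨c • (x - y), hqc⟩
    change χ (c • (x - y)) x = χ (c • (x - y)) y at h3
    rw [map_nsmul, map_sub, h3, sub_self, smul_zero]
  refine Set.Finite.of_finite_image (f := Φ) ?_ hinj
  refine (Set.Finite.pi' (t := fun t : {t : T | p • t = 0} => {u : RatCircle | p ^ e t • u = 0})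
    (fun t => ratCircle_finite (pow_pos hp.pos _))).subset ?_
  rintro _ ⟨x, ⟨n, hn⟩, rfl⟩ t
  exact he t _ ⟨x, rfl⟩ ⟨n, by rw [← map_nsmul, hn, map_zero]⟩

lemma tors_part_finite' {T : Type*} [AddCommGroup T] (N : ℕ) : 0 < N → (∀ p : ℕ, p.Prime → p ∣ N →
    {t : T | ∃ n : ℕ, p ^ n • t = 0}.Finite) → {t : T | ∃ n : ℕ, N ^ n • t = 0}.Finite := by
  induction N using Nat.recOnPosPrimePosCoprime with
  | zero => intro h; omega
  | one => exact fun _ _ => (Set.finite_singleton (0 : T)).subset (by rintro t ⟨n, hn⟩; simpa using hn)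
  | prime_pow p n hp hn =>
    intro _ h
    refine (h p hp (dvd_pow_self p hn.ne')).subset ?_
    rintro t ⟨k, hk⟩
    exact ⟨n * k, by rw [pow_mul, hk]⟩
  | coprime a b ha hb hab iha ihb =>
    intro _ h
    refine (Set.Finite.image2 (fun x y => x + y) (iha (by omega) fun p hp hd => h p hp (hd.mul_right _))
      (ihb (by omega) fun p hp hd => h p hp (hd.mul_left _))).subset ?_
    rintro t ⟨n, hn⟩
    obtain ⟨u, v, huv⟩ : ∃ u : ℤ, ∃ v : ℤ, u * (a ^ n : ℕ) + v * (b ^ n : ℕ) = 1 := Nat.isCoprime_iff_coprime.mpr (Nat.Coprime.pow n n hab)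
    have h2 : (u * (a ^ n : ℕ) + v * (b ^ n : ℕ)) • t = t := by rw [huv, one_smul]
    refine ⟨(v * (b ^ n : ℕ)) • t, ⟨n, ?_⟩, (u * (a ^ n : ℕ)) • t, ⟨n, ?_⟩, ?_⟩
    · rw [mul_smul, natCast_zsmul, smul_comm, ← mul_smul (a ^ n), ← mul_pow, hn, smul_zero]
    · rw [mul_smul, natCast_zsmul, smul_comm, ← mul_smul (b ^ n), mul_comm, ← mul_pow, hn, smul_zero]
    · change (v * (b ^ n : ℕ)) • t + (u * (a ^ n : ℕ)) • t = t
      rw [add_comm, ← add_smul, h2]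

lemma quot_ptors_finite {A T : Type*} [AddCommGroup A] [AddCommGroup T] {k : ℕ} {j : A →+ (Fin k → ℚ)} (hj : Function.Injective j)
    (q : A →+ T) (hq : Function.Surjective q) {p : ℕ} (hp : p.Prime) : {t : T | p • t = 0}.Finite := by
  obtain ⟨F, hF, h⟩ := emb_fin_prime (A := q.ker) (j := j.comp q.ker.subtype) (hj.comp Subtype.val_injective) hp
  have h1 : ∀ t : T, p • t = 0 → ∃ f ∈ F, ∃ a : A, q a = t ∧ p • a = f := by
    intro t ht
    obtain ⟨a, rfl⟩ := hq t
    obtain ⟨f, hf, b, hb⟩ := h ⟨p • a, by rw [AddMonoidHom.mem_ker, map_nsmul, ht]⟩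
    refine ⟨f, hf, a - b, ?_, ?_⟩
    · rw [map_sub]
      have : q b = 0 := b.2
      rw [this, sub_zero]
    · have := congrArg Subtype.val hb
      change p • a = f + p • (b : A) at this
      rw [smul_sub, this]; abel
  have h2 : ∀ t : T, ∃ f : q.ker, p • t = 0 → f ∈ F ∧ ∃ a : A, q a = t ∧ p • a = f := by
    intro t
    by_cases ht : p • t = 0
    · obtain ⟨f, hf, ha⟩ := h1 t ht
      exact ⟨f, fun _ => ⟨hf, ha⟩⟩
    · exact ⟨0, fun h => absurd h ht⟩
  choose f hf using h2
  refine Set.Finite.of_finite_image (f := f) (hF.subset ?_) ?_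
  · rintro _ ⟨t, ht, rfl⟩
    exact (hf t ht).1
  · intro s hs t ht hst
    obtain ⟨a, ha, ha'⟩ := (hf s hs).2
    obtain ⟨b, hb, hb'⟩ := (hf t ht).2
    have : a = b := by
      rw [← sub_eq_zero]
      apply emb_tf hj hp.pos
      rw [smul_sub, ha', hb', hst, sub_self]
    rw [← ha, ← hb, this]

/-- If no prime divisor of `N` lies in `π`, the `N`-primary part of a quotient of a nice group is finite. -/
lemma NiceGrp.tors_finite {π : Set ℕ} {A T : Type*} [AddCommGroup A] [AddCommGroup T] (h : NiceGrp π A)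
    (q : A →+ T) (hq : Function.Surjective q) {N : ℕ} (hN : 0 < N) (hNπ : ∀ p : ℕ, p.Prime → p ∣ N → p ∉ π) :
    {t : T | ∃ n : ℕ, N ^ n • t = 0}.Finite := by
  apply tors_part_finite' N hN
  intro p hp hpN
  obtain ⟨⟨k, j, hj⟩, hs⟩ := h
  exact tors_part_finite hp (quot_ptors_finite hj q hq hp) fun hc => hNπ p hp hpN (hs p hp (hc.of_surj q hq))
end

section
/-! ### Good groups: artinian `ω`-torsion groups -/

def OmegaNum (ω : Set ℕ) (n : ℕ) : Prop := 0 < n ∧ ∀ p : ℕ, p.Prime → p ∣ n → p ∈ ω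

lemma OmegaNum.mul {ω : Set ℕ} {m n : ℕ} (hm : OmegaNum ω m) (hn : OmegaNum ω n) : OmegaNum ω (m * n) :=
  ⟨Nat.mul_pos hm.1 hn.1, fun p hp h => (hp.dvd_mul.mp h).elim (hm.2 p hp) (hn.2 p hp)⟩

lemma omegaTorsion_iff {ω : Set ℕ} {A : Type*} [AddGroup A] :
    IsOmegaTorsion ω A ↔ ∀ a : A, ∃ n : ℕ, OmegaNum ω n ∧ n • a = 0 := by
  refine forall_congr' fun a => ⟨fun ⟨h1, h2⟩ => ?_, fun ⟨n, hn, h⟩ => ?_⟩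
  · exact ⟨addOrderOf a, ⟨h1.addOrderOf_pos, fun p hp hd => h2 p hp (by exact_mod_cast hd)⟩, addOrderOf_nsmul_eq_zero a⟩
  · refine ⟨isOfFinAddOrder_iff_nsmul_eq_zero.mpr ⟨n, hn.1, h⟩, fun p hp hd => hn.2 p hp ?_⟩
    have : p ∣ addOrderOf a := by exact_mod_cast hd
    exact this.trans (addOrderOf_dvd_of_nsmul_eq_zero h)

/-- Artinian `ω`-torsion groups. -/
def Good (ω : Set ℕ) (A : Type*) [AddCommGroup A] : Prop :=
  IsArtinian ℤ A ∧ ∀ a : A, ∃ n : ℕ, OmegaNum ω n ∧ n • a = 0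

lemma good_iff {ω : Set ℕ} {A : Type*} [AddCommGroup A] : Good ω A ↔ IsCernikovOmega ω A := by
  unfold Good IsCernikovOmega
  rw [isCernikov_iff, omegaTorsion_iff]

lemma Good.exact {ω : Set ℕ} {X Y Z : Type*} [AddCommGroup X] [AddCommGroup Y] [AddCommGroup Z]
    (f : X →+ Y) (g : Y →+ Z) (h : ∀ y, g y = 0 → ∃ x, f x = y) (hX : Good ω X) (hZ : Good ω Z) : Good ω Y := by
  obtain ⟨hX1, hX2⟩ := hX
  obtain ⟨hZ1, hZ2⟩ := hZ
  constructor
  · have h1 : IsArtinian ℤ (LinearMap.range f.toIntLinearMap) := inferInstance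
    have hle : LinearMap.ker g.toIntLinearMap ≤ LinearMap.range f.toIntLinearMap := fun y hy => h y hy
    have h2 : IsArtinian ℤ (LinearMap.ker g.toIntLinearMap) :=
      isArtinian_of_injective (Submodule.inclusion hle) (Submodule.inclusion_injective hle)
    have h3 : IsArtinian ℤ (Y ⧸ LinearMap.ker g.toIntLinearMap) :=
      isArtinian_of_injective ((LinearMap.ker g.toIntLinearMap).liftQ g.toIntLinearMap le_rfl)
        (LinearMap.ker_eq_bot.mp (Submodule.ker_liftQ_eq_bot _ _ _ le_rfl))
    exact (isArtinian_iff_submodule_quotient (LinearMap.ker g.toIntLinearMap)).mpr ⟨h2, h3⟩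
  · intro y
    obtain ⟨n, hn, hny⟩ := hZ2 (g y)
    obtain ⟨x, hx⟩ := h (n • y) (by rw [map_nsmul, hny])
    obtain ⟨m, hm, hmx⟩ := hX2 x
    exact ⟨m * n, hm.mul hn, by rw [mul_smul, ← hx, ← map_nsmul, hmx, map_zero]⟩

lemma good_of_subsingleton {ω : Set ℕ} {A : Type*} [AddCommGroup A] [Subsingleton A] : Good ω A :=
  ⟨inferInstance, fun a => ⟨1, ⟨one_pos, fun p hp h => absurd (Nat.dvd_one.mp h) hp.ne_one⟩, Subsingleton.elim _ _⟩⟩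

lemma Good.of_surj {ω : Set ℕ} {X Y : Type*} [AddCommGroup X] [AddCommGroup Y]
    (f : X →+ Y) (h : Function.Surjective f) (hX : Good ω X) : Good ω Y :=
  Good.exact (Z := PUnit.{1}) f 0 (fun y _ => h y) hX good_of_subsingleton

lemma Good.of_inj {ω : Set ℕ} {X Y : Type*} [AddCommGroup X] [AddCommGroup Y]
    (f : X →+ Y) (h : Function.Injective f) (hY : Good ω Y) : Good ω X :=
  Good.exact (X := PUnit.{1}) 0 f (fun y hy => ⟨0, by rw [map_zero]; exact ((injective_iff_map_eq_zero f).mp h y hy).symm⟩) good_of_subsingleton hY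

lemma Good.pi {ω : Set ℕ} {k : ℕ} {A : Type*} [AddCommGroup A] (h : Good ω A) : Good ω (Fin k → A) := by
  induction k with
  | zero => exact good_of_subsingleton
  | succ k ih =>
    refine Good.exact (X := A) (Z := Fin k → A)
      { toFun := fun a => Fin.cons a 0
        map_zero' := by funext i; refine Fin.cases ?_ (fun j => ?_) i <;> simp
        map_add' := fun x y => by funext i; refine Fin.cases ?_ (fun j => ?_) i <;> simp }
      { toFun := fun x => Fin.tail x
        map_zero' := rfl
        map_add' := fun x y => rfl } ?_ h ih
    intro y hy
    refine ⟨y 0, ?_⟩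
    funext i
    refine Fin.cases ?_ (fun j => ?_) i
    · rfl
    · exact (congrFun hy j).symm

/-! ### Ext over a commutative ring -/

section
variable {R : Type} [CommRing R]

/-- `Ext` between unbundled modules. -/
abbrev EM (R : Type) [CommRing R] (A B : Type) [AddCommGroup A] [AddCommGroup B] [Module R A] [Module R B] (n : ℕ) : Type :=
  Abelian.Ext (ModuleCat.of R A) (ModuleCat.of R B) n

def GE (ω : Set ℕ) (R : Type) [CommRing R] (A B : Type) [AddCommGroup A] [AddCommGroup B] [Module R A] [Module R B] : Prop :=
  ∀ n, Good ω (EM R A B n)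

open Abelian.Ext

variable {A B C X : Type} [AddCommGroup A] [AddCommGroup B] [AddCommGroup C] [AddCommGroup X]
  [Module R A] [Module R B] [Module R C] [Module R X]

lemma ses_of {f : A →ₗ[R] B} {g : B →ₗ[R] C} (hf : Function.Injective f) (hg : Function.Surjective g)
    (hfg : Function.Exact f g) :
    (ShortComplex.mk (ModuleCat.ofHom f) (ModuleCat.ofHom g) (by
      ext x; exact hfg.apply_apply_eq_zero x)).ShortExact :=
  { exact := by
      rw [ShortComplex.ShortExact.moduleCat_exact_iff_function_exact]
      exact hfg
    mono_f := (ModuleCat.mono_iff_injective _).mpr hf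
    epi_g := (ModuleCat.epi_iff_surjective _).mpr hg }


variable {ω : Set ℕ}

lemma GE.contra_mid {f : A →ₗ[R] B} {g : B →ₗ[R] C} (hf : Function.Injective f) (hg : Function.Surjective g)
    (hfg : Function.Exact f g) (hA : GE ω R A X) (hC : GE ω R C X) : GE ω R B X := by
  intro n
  have hS := ses_of hf hg hfg
  exact Good.exact ((mk₀ (ModuleCat.ofHom g)).precomp (ModuleCat.of R X) (zero_add n))
    ((mk₀ (ModuleCat.ofHom f)).precomp (ModuleCat.of R X) (zero_add n))
    (fun y hy => contravariant_sequence_exact₂ hS _ y hy) (hC n) (hA n)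

lemma GE.contra_right {f : A →ₗ[R] B} {g : B →ₗ[R] C} (hf : Function.Injective f) (hg : Function.Surjective g)
    (hfg : Function.Exact f g) (hA : GE ω R A X) (hB : GE ω R B X) : GE ω R C X := by
  intro n
  have hS := ses_of hf hg hfg
  cases n with
  | zero =>
    have : Epi (ModuleCat.ofHom g) := (ModuleCat.epi_iff_surjective _).mpr hg
    exact Good.of_inj ((mk₀ (ModuleCat.ofHom g)).precomp (ModuleCat.of R X) (zero_add 0))
      (precomp_mk₀_injective_of_epi _ _) (hB 0)
  | succ n =>
    exact Good.exact (hS.extClass.precomp (ModuleCat.of R X) (add_comm 1 n))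
      ((mk₀ (ModuleCat.ofHom g)).precomp (ModuleCat.of R X) (zero_add (n + 1)))
      (fun y hy => contravariant_sequence_exact₃ hS _ y hy (add_comm 1 n)) (hA n) (hB (n + 1))

lemma GE.co_mid {f : A →ₗ[R] B} {g : B →ₗ[R] C} (hf : Function.Injective f) (hg : Function.Surjective g)
    (hfg : Function.Exact f g) (hA : GE ω R X A) (hC : GE ω R X C) : GE ω R X B := by
  intro n
  have hS := ses_of hf hg hfg
  exact Good.exact ((mk₀ (ModuleCat.ofHom f)).postcomp (ModuleCat.of R X) (add_zero n))
    ((mk₀ (ModuleCat.ofHom g)).postcomp (ModuleCat.of R X) (add_zero n))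
    (fun y hy => covariant_sequence_exact₂ _ hS y hy) (hA n) (hC n)

lemma EM_smul_zero_left {r : R} (h : ∀ a : A, r • a = 0) {n : ℕ} (x : EM R A X n) : r • x = 0 := by
  have h1 : x = (mk₀ (𝟙 (ModuleCat.of R A))).comp x (zero_add n) := (mk₀_id_comp x).symm
  have h2 : r • 𝟙 (ModuleCat.of R A) = 0 := by
    ext a; exact h a
  rw [h1, ← smul_comp, ← mk₀_smul, h2, mk₀_zero, zero_comp]

lemma EM_smul_zero_right {r : R} (h : ∀ a : X, r • a = 0) {n : ℕ} (x : EM R A X n) : r • x = 0 := by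
  have h2 : r • 𝟙 (ModuleCat.of R X) = 0 := by
    ext a; exact h a
  rw [smul_eq_comp_mk₀, h2, mk₀_zero, comp_zero]

/-- `r` acts injectively on `A` with cokernel `C` and kills `X`. -/
lemma GE.of_cokernel (r : R) (hr : Function.Injective (fun a : A => r • a)) (hX : ∀ x : X, r • x = 0)
    (g : A →ₗ[R] C) (hg : Function.Surjective g) (hfg : ∀ a, g a = 0 ↔ ∃ b : A, r • b = a)
    (hC : GE ω R C X) : GE ω R A X := by
  intro n
  have hS := ses_of (f := LinearMap.lsmul R A r) (g := g) hr hg (fun a => hfg a)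
  refine Good.of_surj ((mk₀ (ModuleCat.ofHom g)).precomp (ModuleCat.of R X) (zero_add n)) ?_ (hC n)
  intro y
  refine contravariant_sequence_exact₂ hS _ y ?_
  change (mk₀ (ModuleCat.ofHom (LinearMap.lsmul R A r))).comp y _ = 0
  have h2 : ModuleCat.ofHom (LinearMap.lsmul R A r) = r • 𝟙 (ModuleCat.of R A) := by
    ext a; rfl
  rw [h2, mk₀_smul, smul_comp, mk₀_id_comp, EM_smul_zero_right hX]

/-- `r` kills `X`, acts surjectively on `A` with kernel `C`. -/
lemma GE.of_kernel (r : R) (hr : Function.Surjective (fun a : A => r • a)) (hX : ∀ x : X, r • x = 0)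
    (f : C →ₗ[R] A) (hf : Function.Injective f) (hfg : ∀ a : A, r • a = 0 ↔ ∃ c, f c = a)
    (hC : GE ω R X C) : GE ω R X A := by
  intro n
  have hS := ses_of (f := f) (g := LinearMap.lsmul R A r) hf hr (fun a => hfg a)
  refine Good.of_surj ((mk₀ (ModuleCat.ofHom f)).postcomp (ModuleCat.of R X) (add_zero n)) ?_ (hC n)
  intro y
  refine covariant_sequence_exact₂ _ hS y ?_
  change y.comp (mk₀ (ModuleCat.ofHom (LinearMap.lsmul R A r))) _ = 0
  have h2 : ModuleCat.ofHom (LinearMap.lsmul R A r) = r • 𝟙 (ModuleCat.of R A) := by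
    ext a; rfl
  rw [h2, ← smul_eq_comp_mk₀, EM_smul_zero_left hX]

end

lemma GE.of_equiv_left {R : Type} [CommRing R] {A B X : Type} [AddCommGroup A] [AddCommGroup B] [AddCommGroup X]
    [Module R A] [Module R B] [Module R X] {ω : Set ℕ} (e : A ≃ₗ[R] B) (h : GE ω R A X) : GE ω R B X := by
  refine GE.contra_right (A := PUnit.{1}) (f := (0 : PUnit.{1} →ₗ[R] A)) (g := e.toLinearMap) (fun _ _ _ => rfl) e.surjective ?_ ?_ h
  · intro a
    constructor
    · intro h; exact ⟨0, by rw [map_zero]; exact (e.injective (by rw [map_zero]; exact h)).symm⟩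
    · rintro ⟨b, rfl⟩; simp
  · intro n
    have : Subsingleton (EM R PUnit.{1} X n) := ⟨fun x y => by
      have h1 : ∀ z : EM R PUnit.{1} X n, z = 0 := fun z => by
        have := EM_smul_zero_left (R := R) (r := 1) (A := PUnit.{1}) (X := X) (fun a => rfl) z
        rwa [one_smul] at this
      rw [h1 x, h1 y]⟩
    exact good_of_subsingleton

lemma GE.of_fg {R : Type} [CommRing R] [IsNoetherianRing R] {ω : Set ℕ} {B : Type} [AddCommGroup B] [Module R B]
    (hB : Good ω B) (A : Type) [AddCommGroup A] [Module R A] [Module.Finite R A] : GE ω R A B := by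
  intro n
  induction n generalizing A with
  | zero =>
    obtain ⟨k, v, hv⟩ := Module.Finite.exists_fin (R := R) (M := A)
    let φ : EM R A B 0 →+ (Fin k → B) :=
      { toFun := fun x i => (Abelian.Ext.addEquiv₀ x).hom (v i)
        map_zero' := by funext i; rw [map_zero]; rfl
        map_add' := fun x y => by funext i; rw [map_add]; rfl }
    refine Good.of_inj φ ?_ hB.pi
    intro x y hxy
    apply Abelian.Ext.addEquiv₀.injective
    apply ModuleCat.hom_ext
    apply LinearMap.ext_on_range hv
    intro i
    exact congrFun hxy i
  | succ n ih =>
    obtain ⟨k, g, hg⟩ := Module.Finite.exists_fin' R A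
    have hS := ses_of (f := (LinearMap.ker g).subtype) (g := g) (Submodule.injective_subtype _) hg
      (LinearMap.exact_subtype_ker_map g)
    have : Module.Finite R (LinearMap.ker g) := inferInstance
    have : Projective (ModuleCat.of R (Fin k → R)) := (IsProjective.iff_projective _).mp inferInstance
    have hP : Good ω (EM R (Fin k → R) B (n + 1)) := by
      have : Subsingleton (EM R (Fin k → R) B (n + 1)) := Abelian.Ext.subsingleton_of_projective _ _ _
      exact good_of_subsingleton
    exact Good.exact (hS.extClass.precomp (ModuleCat.of R B) (add_comm 1 n))
      ((Abelian.Ext.mk₀ (ModuleCat.ofHom g)).precomp (ModuleCat.of R B) (zero_add (n + 1)))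
      (fun y hy => Abelian.Ext.contravariant_sequence_exact₃ hS _ y hy (add_comm 1 n)) (ih _) hP
end

section
/-! ### A vanishing theorem -/

lemma injective_of_localization {R : Type} [CommRing R] (S : Submonoid R) {J : Type} [AddCommGroup J] [Module R J]
    [Module (Localization S) J] [IsScalarTower R (Localization S) J] (h : Module.Injective (Localization S) J) :
    Module.Injective R J := by
  constructor
  intro X Y _ _ _ _ f hf g
  have hu : ∀ x : S, IsUnit ((algebraMap R (Module.End R J)) x) := by
    intro x
    rw [Module.End.isUnit_iff]
    have hx := IsLocalization.map_units (Localization S) x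
    obtain ⟨u, hu⟩ := hx
    have key : ∀ z : J, (algebraMap R (Module.End R J)) x z = u • z := fun z => by
      rw [Module.algebraMap_end_apply, Units.smul_def, hu, algebraMap_smul]
    constructor
    · intro a b hab
      rw [key, key] at hab
      exact smul_left_cancel u hab
    · intro b
      exact ⟨u⁻¹ • b, by rw [key, smul_inv_smul]⟩
  let g1 : LocalizedModule S X →ₗ[R] J := LocalizedModule.lift S g hu
  let g2 : LocalizedModule S X →ₗ[Localization S] J := g1.extendScalarsOfIsLocalization S (Localization S)
  let f2 : LocalizedModule S X →ₗ[Localization S] LocalizedModule S Y := LocalizedModule.map S f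
  have hf2 : Function.Injective f2 := LocalizedModule.map_injective S f hf
  obtain ⟨h2, hh2⟩ := h.out f2 hf2 g2
  refine ⟨(h2.restrictScalars R).comp (LocalizedModule.mkLinearMap S Y), fun x => ?_⟩
  have h3 := hh2 (LocalizedModule.mkLinearMap S X x)
  have h4 : f2 (LocalizedModule.mkLinearMap S X x) = LocalizedModule.mkLinearMap S Y (f x) := by
    change LocalizedModule.map S f (LocalizedModule.mk x 1) = LocalizedModule.mk (f x) 1
    rw [LocalizedModule.map_mk]
  rw [h4] at h3
  refine h3.trans ?_
  exact LinearMap.congr_fun (LocalizedModule.lift_comp S g hu) x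

lemma exists_injective_bij {R : Type} [CommRing R] (S : Submonoid R) {D : Type} [AddCommGroup D] [Module R D]
    (hD : ∀ s ∈ S, Function.Bijective (fun d : D => s • d)) :
    ∃ (J : Type) (_ : AddCommGroup J) (_ : Module R J) (f : D →ₗ[R] J), Function.Injective f ∧ Module.Injective R J ∧
      ∀ s ∈ S, Function.Bijective (fun d : J => s • d) := by
  let L := ModuleCat.of (Localization S) (LocalizedModule S D)
  let J := Injective.under L
  let ι : L ⟶ J := Injective.ι L
  have hι : Function.Injective ι.hom := (ModuleCat.mono_iff_injective ι).mp inferInstance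
  have hJ : Module.Injective (Localization S) J := by
    rw [Module.injective_iff_injective_object]
    change Injective J
    infer_instance
  let : Module R J := Module.compHom J (algebraMap R (Localization S))
  have : IsScalarTower R (Localization S) J := ⟨fun r x j => by
    rw [Algebra.smul_def, mul_smul]; rfl⟩
  refine ⟨J, inferInstance, inferInstance,
    (ι.hom.restrictScalars R).comp (LocalizedModule.mkLinearMap S D), ?_, injective_of_localization S hJ, ?_⟩
  · refine hι.comp ?_
    intro a b hab
    have : LocalizedModule.mk a (1 : S) = LocalizedModule.mk b 1 := hab
    rw [LocalizedModule.mk_eq] at this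
    obtain ⟨u, hu⟩ := this
    simp only [one_smul] at hu
    exact (hD u u.2).1 hu
  · intro s hs
    obtain ⟨u, hu⟩ := IsLocalization.map_units (Localization S) ⟨s, hs⟩
    have key : ∀ z : J, s • z = u • z := fun z => by
      rw [Units.smul_def, hu]; rfl
    constructor
    · intro a b hab
      change s • a = s • b at hab
      rw [key, key] at hab
      exact smul_left_cancel u hab
    · intro b
      exact ⟨u⁻¹ • b, by change s • _ = b; rw [key, smul_inv_smul]⟩

lemma EM_vanish {R : Type} [CommRing R] (S : Submonoid R) {A : Type} [AddCommGroup A] [Module R A]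
    (hA : ∀ a : A, ∃ s ∈ S, s • a = 0) (n : ℕ) (D : Type) [AddCommGroup D] [Module R D]
    (hD : ∀ s ∈ S, Function.Bijective (fun d : D => s • d)) (x : EM R A D n) : x = 0 := by
  induction n generalizing D with
  | zero =>
    apply Abelian.Ext.addEquiv₀.injective
    rw [map_zero]
    apply ModuleCat.hom_ext
    ext a
    obtain ⟨s, hs, hsa⟩ := hA a
    apply (hD s hs).1
    change s • (Abelian.Ext.addEquiv₀ x).hom a = s • (0 : D)
    rw [← map_smul]
    rw [smul_zero]
    refine (congrArg _ hsa).trans (map_zero _)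
  | succ n ih =>
    obtain ⟨J, _, _, f, hf, hJ, hJS⟩ := exists_injective_bij S hD
    have hS := ses_of (f := f) (g := (LinearMap.range f).mkQ) hf (Submodule.mkQ_surjective _)
      (LinearMap.exact_map_mkQ_range f)
    have : Injective (ModuleCat.of R J) := Module.injective_object_of_injective_module R J
    obtain ⟨y, rfl⟩ := Abelian.Ext.covariant_sequence_exact₁ _ hS x (Abelian.Ext.eq_zero_of_injective _) rfl
    have hy : y = 0 := ih (J ⧸ LinearMap.range f) (by
      intro s hs
      constructor
      · refine (injective_iff_map_eq_zero (DistribSMul.toAddMonoidHom (J ⧸ LinearMap.range f) s)).mpr ?_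
        intro q hq
        induction q using Submodule.Quotient.induction_on with
        | H j =>
          change s • (Submodule.Quotient.mk j : J ⧸ LinearMap.range f) = 0 at hq
          rw [← Submodule.Quotient.mk_smul, Submodule.Quotient.mk_eq_zero] at hq
          obtain ⟨d, hd⟩ := hq
          obtain ⟨d', rfl⟩ := (hD s hs).2 d
          rw [Submodule.Quotient.mk_eq_zero]
          refine ⟨d', (hJS s hs).1 ?_⟩
          change s • f d' = s • j
          rw [← hd]; exact (map_smul f s d').symm
      · intro q
        induction q using Submodule.Quotient.induction_on with
        | H j =>
          obtain ⟨j', rfl⟩ := (hJS s hs).2 j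
          exact ⟨Submodule.Quotient.mk j', rfl⟩) y
    rw [hy, Abelian.Ext.zero_comp]

lemma GE.of_vanish {R : Type} [CommRing R] (S : Submonoid R) {A D : Type} [AddCommGroup A] [Module R A]
    [AddCommGroup D] [Module R D] {ω : Set ℕ}
    (hA : ∀ a : A, ∃ s ∈ S, s • a = 0) (hD : ∀ s ∈ S, Function.Bijective (fun d : D => s • d)) : GE ω R A D := by
  intro n
  have : Subsingleton (EM R A D n) := ⟨fun x y => by
    rw [EM_vanish S hA n D hD x, EM_vanish S hA n D hD y]⟩
  exact good_of_subsingleton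
end

section
/-! ### Surjective endomorphisms of artinian groups -/

lemma card_ker_range {P Q : Type*} [AddCommGroup P] [AddCommGroup Q] (h : P →+ Q) :
    Nat.card P = Nat.card h.range * Nat.card h.ker := by
  rw [AddSubgroup.card_eq_card_quotient_mul_card_addSubgroup h.ker,
    Nat.card_congr (QuotientAddGroup.quotientKerEquivRange h).toEquiv]

def tk (D : Type*) [AddCommGroup D] (n : ℕ) : AddSubgroup D := (nsmulAddMonoidHom (α := D) n).ker

lemma mem_tk {D : Type*} [AddCommGroup D] {n : ℕ} {x : D} : x ∈ tk D n ↔ n • x = 0 := Iff.rfl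

lemma tk_finite {D : Type*} [AddCommGroup D] [IsArtinian ℤ D] {n : ℕ} (hn : 0 < n) : Finite (tk D n) := by
  have : IsArtinian ℤ (tk D n) := inferInstanceAs (IsArtinian ℤ (AddSubgroup.toIntSubmodule (tk D n)))
  exact finite_of_artinian_bounded hn (fun a => Subtype.ext a.2)

lemma ker_finite_of_surj {D : Type*} [AddCommGroup D] [IsArtinian ℤ D] (f : D →+ D) (hf : Function.Surjective f) :
    Finite f.ker := by
  have : IsArtinian ℤ f.ker := inferInstanceAs (IsArtinian ℤ (AddSubgroup.toIntSubmodule f.ker))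
  obtain ⟨m, hm, hdiv⟩ := exists_mul_div (A := f.ker)
  have hfm : Finite (tk D m) := tk_finite hm
  have key : ∀ M : ℕ, 0 < M → {x : D | f x = 0 ∧ (m * M) • x = 0}.ncard ≤ Nat.card (tk D m) := by
    intro M hM
    have hP : Finite (tk D (m * M)) := tk_finite (Nat.mul_pos hm hM)
    have hM' : Finite (tk D M) := tk_finite hM
    let h1 : tk D (m * M) →+ D := f.comp (tk D (m * M)).subtype
    let h2 : tk D (m * M) →+ D := (nsmulAddMonoidHom (α := D) M).comp (tk D (m * M)).subtype
    have hr1 : tk D M ≤ h1.range := by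
      intro x hx
      obtain ⟨y, rfl⟩ := hf x
      have hy : M • y ∈ f.ker := by
        rw [AddMonoidHom.mem_ker, map_nsmul]; exact hx
      obtain ⟨k, hk⟩ := hdiv M hM ⟨M • y, hy⟩
      have hk' : M • m • (k : D) = m • M • y := congrArg Subtype.val hk
      have hfk : f k = 0 := k.2
      refine ⟨⟨y - k, ?_⟩, ?_⟩
      · rw [mem_tk, mul_smul, smul_sub, smul_sub, ← hk', smul_comm M m (k : D), sub_self]
      · change f (y - k) = f y
        rw [map_sub, hfk, sub_zero]
    have hr2 : h2.range ≤ tk D m := by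
      rintro _ ⟨x, rfl⟩
      have := x.2
      rw [mem_tk, mul_smul] at this
      exact this
    have hk2 : Nat.card h2.ker ≤ Nat.card (tk D M) := by
      refine Nat.card_le_card_of_injective (fun x : h2.ker => (⟨(x : tk D (m * M)), x.2⟩ : tk D M)) ?_
      intro x y hxy
      apply Subtype.ext; apply Subtype.ext
      exact congrArg (fun z : tk D M => (z : D)) hxy
    have hk1 : {x : D | f x = 0 ∧ (m * M) • x = 0}.ncard ≤ Nat.card h1.ker := by
      rw [← Nat.card_coe_set_eq]
      refine Nat.card_le_card_of_injective (fun x : {x : D | f x = 0 ∧ (m * M) • x = 0} => (⟨⟨x, x.2.2⟩, x.2.1⟩ : h1.ker)) ?_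
      intro x y hxy
      apply Subtype.ext
      exact congrArg (fun z : h1.ker => ((z : tk D (m * M)) : D)) hxy
    have e1 := card_ker_range h1
    have e2 := card_ker_range h2
    have hfr1 : Finite h1.range := Finite.of_surjective h1.rangeRestrict h1.rangeRestrict_surjective
    have l1 : Nat.card (tk D M) ≤ Nat.card h1.range := Nat.card_le_card_of_injective (AddSubgroup.inclusion hr1) (AddSubgroup.inclusion_injective hr1)
    have l2 : Nat.card h2.range ≤ Nat.card (tk D m) := Nat.card_le_card_of_injective (AddSubgroup.inclusion hr2) (AddSubgroup.inclusion_injective hr2)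
    have hpos : 0 < Nat.card (tk D M) := Nat.card_pos
    have : Nat.card (tk D M) * Nat.card h1.ker ≤ Nat.card (tk D M) * Nat.card (tk D m) := by
      calc Nat.card (tk D M) * Nat.card h1.ker ≤ Nat.card h1.range * Nat.card h1.ker := Nat.mul_le_mul_right _ l1
        _ = Nat.card h2.range * Nat.card h2.ker := by rw [← e1, e2]
        _ ≤ Nat.card (tk D m) * Nat.card (tk D M) := Nat.mul_le_mul l2 hk2
        _ = _ := mul_comm _ _
    exact hk1.trans (Nat.le_of_mul_le_mul_left this hpos)
  by_contra hinf
  have hinf' : (f.ker : Set D).Infinite := Set.infinite_coe_iff.mp (not_finite_iff_infinite.mp hinf)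
  obtain ⟨t, ht, hcard⟩ := hinf'.exists_subset_card_eq (Nat.card (tk D m) + 1)
  choose o ho hox using fun x : D => torsion_of_artinian x
  let M := ∏ x ∈ t, o x
  have hM : 0 < M := Finset.prod_pos fun x _ => ho x
  have hsub : (t : Set D) ⊆ {x : D | f x = 0 ∧ (m * M) • x = 0} := by
    intro x hx
    refine ⟨ht hx, ?_⟩
    obtain ⟨c, hc⟩ := Finset.dvd_prod_of_mem o hx
    rw [mul_smul]
    change m • (∏ x ∈ t, o x) • x = 0
    rw [hc, mul_comm, mul_smul, hox, smul_zero, smul_zero]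
  have hfin : {x : D | f x = 0 ∧ (m * M) • x = 0}.Finite := by
    have : Finite (tk D (m * M)) := tk_finite (Nat.mul_pos hm hM)
    exact (Set.toFinite (tk D (m * M) : Set D)).subset fun x hx => hx.2
  have h1 := Set.ncard_le_ncard hsub hfin
  rw [Set.ncard_coe_finset, hcard] at h1
  have := key M hM
  omega

/-! ### Arithmetic -/

lemma split_nat (P : Set ℕ) (N : ℕ) : 0 < N → ∃ a b : ℕ, N = a * b ∧ (∀ p : ℕ, p.Prime → p ∣ a → p ∈ P) ∧
    (∀ p : ℕ, p.Prime → p ∣ b → p ∉ P) := by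
  have h1 : ∀ (Q : Prop) (p : ℕ), p.Prime → p ∣ 1 → Q := fun Q p hp h => absurd (Nat.dvd_one.mp h) hp.ne_one
  induction N using Nat.recOnMul with
  | zero => intro h; omega
  | one => exact fun _ => ⟨1, 1, rfl, fun p => h1 _ p, fun p => h1 _ p⟩
  | prime q hq =>
    intro _
    by_cases h : q ∈ P
    · exact ⟨q, 1, (mul_one q).symm, fun p hp hd => (Nat.prime_dvd_prime_iff_eq hp hq).mp hd ▸ h, fun p => h1 _ p⟩
    · exact ⟨1, q, (one_mul q).symm, fun p => h1 _ p, fun p hp hd => (Nat.prime_dvd_prime_iff_eq hp hq).mp hd ▸ h⟩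
  | mul x y ihx ihy =>
    intro hxy
    obtain ⟨a, b, rfl, ha, hb⟩ := ihx (Nat.pos_of_mul_pos_right hxy)
    obtain ⟨c, d, rfl, hc, hd⟩ := ihy (Nat.pos_of_mul_pos_left hxy)
    exact ⟨a * c, b * d, by ring, fun p hp h => (hp.dvd_mul.mp h).elim (ha p hp) (hc p hp),
      fun p hp h => (hp.dvd_mul.mp h).elim (hb p hp) (hd p hp)⟩

lemma dvd_pow_of_primes {N : ℕ} (m : ℕ) : 0 < m → (∀ p : ℕ, p.Prime → p ∣ m → p ∣ N) → ∃ k, m ∣ N ^ k := by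
  induction m using Nat.recOnMul with
  | zero => intro h; omega
  | one => exact fun _ _ => ⟨0, one_dvd _⟩
  | prime p hp => exact fun _ h => ⟨1, by rw [pow_one]; exact h p hp dvd_rfl⟩
  | mul x y ihx ihy =>
    intro hxy h
    obtain ⟨k, hk⟩ := ihx (Nat.pos_of_mul_pos_right hxy) fun p hp hd => h p hp (hd.mul_right _)
    obtain ⟨l, hl⟩ := ihy (Nat.pos_of_mul_pos_left hxy) fun p hp hd => h p hp (hd.mul_left _)
    exact ⟨k + l, by rw [pow_add]; exact mul_dvd_mul hk hl⟩

lemma exists_exponent {B : Type*} [AddCommGroup B] [IsArtinian ℤ B] :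
    ∃ N : ℕ, 0 < N ∧ ∀ b : B, ∃ n : ℕ, N ^ n • b = 0 := by
  obtain ⟨S, r, p, hS, hp, ⟨e⟩⟩ := (isCernikov_iff (A := B)).mpr inferInstance
  have hpp : 0 < ∏ i, p i := Finset.prod_pos fun i _ => (hp i).pos
  refine ⟨S.index * ∏ i, p i, Nat.mul_pos (Nat.pos_of_ne_zero hS) hpp, fun b => ?_⟩
  have hb : S.index • b ∈ S := AddSubgroup.nsmul_index_mem S b
  let s : S := ⟨S.index • b, hb⟩
  choose n hn using fun i => (e s i).2
  let k := ∑ i, n i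
  have h1 : (∏ i, p i) ^ k • e s = 0 := by
    funext i
    apply Subtype.ext
    change (∏ i, p i) ^ k • ((e s i : pruferSubgroup (p i)) : RatCircle) = 0
    have hd : p i ^ n i ∣ (∏ i, p i) ^ k :=
      (pow_dvd_pow_of_dvd (Finset.dvd_prod_of_mem p (Finset.mem_univ i)) _).trans
        (pow_dvd_pow _ (Finset.single_le_sum (f := n) (fun _ _ => Nat.zero_le _) (Finset.mem_univ i)))
    obtain ⟨c, hc⟩ := hd
    rw [hc, mul_comm, mul_smul, hn, smul_zero]
  have h2 : (∏ i, p i) ^ k • s = 0 := by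
    apply e.injective
    rw [map_nsmul, h1, map_zero]
  have h3 : (∏ i, p i) ^ k • S.index • b = 0 := congrArg Subtype.val h2
  refine ⟨k + 1, ?_⟩
  have : (S.index * ∏ i, p i) ^ (k + 1) = (S.index ^ k * ∏ i, p i) * ((∏ i, p i) ^ k * S.index) := by ring
  rw [this, mul_smul, mul_smul ((∏ i, p i) ^ k), h3, smul_zero]
end

section
section nice
variable {R : Type} [CommRing R] {ω π : Set ℕ}
variable {A B C D X : Type} [AddCommGroup A] [AddCommGroup B] [AddCommGroup C] [AddCommGroup D] [AddCommGroup X]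
  [Module R A] [Module R B] [Module R C] [Module R D] [Module R X]

lemma natCast_smul_inj (hA : NiceGrp π A) {m : ℕ} (hm : 0 < m) : Function.Injective (fun a : A => (m : R) • a) := by
  intro a b hab
  have hab' : (m : R) • a = (m : R) • b := hab
  rw [Nat.cast_smul_eq_nsmul, Nat.cast_smul_eq_nsmul] at hab'
  refine sub_eq_zero.mp (hA.tf hm (a := a - b) ?_)
  rw [smul_sub, hab', sub_self]

lemma finite_of_reps {Q : Type} (q : A → Q) (F : Set A) (hF : F.Finite) (h : ∀ y : Q, ∃ f ∈ F, q f = y) : Finite Q := by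
  have : Finite F := hF
  exact Finite.of_surjective (fun f : F => q f) fun y => by
    obtain ⟨f, hf, h⟩ := h y; exact ⟨⟨f, hf⟩, h⟩

lemma ge_finite [IsNoetherianRing R] (hA : NiceGrp π A) [Finite X] (hX : Good ω X) : GE ω R A X := by
  have hm : 0 < Nat.card X := Nat.card_pos
  let f := LinearMap.lsmul R A ((Nat.card X : ℕ) : R)
  have hfin : Finite (A ⧸ LinearMap.range f) := by
    obtain ⟨k, j, hj⟩ := hA.1
    obtain ⟨F, hF, hFa⟩ := emb_fin hj (Nat.card X) hm
    refine finite_of_reps (LinearMap.range f).mkQ F hF fun y => ?_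
    obtain ⟨a, rfl⟩ := Submodule.mkQ_surjective _ y
    obtain ⟨x, hx, b, rfl⟩ := hFa a
    refine ⟨x, hx, ?_⟩
    rw [map_add, left_eq_add]
    refine (Submodule.Quotient.mk_eq_zero _).mpr ⟨b, ?_⟩
    change ((Nat.card X : ℕ) : R) • b = _
    rw [Nat.cast_smul_eq_nsmul]
  refine GE.of_cokernel ((Nat.card X : ℕ) : R) (natCast_smul_inj hA hm) ?_ (LinearMap.range f).mkQ
    (Submodule.mkQ_surjective _) (fun a => ?_) (GE.of_fg hX _)
  · intro x
    rw [Nat.cast_smul_eq_nsmul]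
    exact card_nsmul_eq_zero'
  · exact Submodule.Quotient.mk_eq_zero _

/-- a finite set of elements whose span has torsion quotient -/
lemma exists_basis (hA : NiceGrp π A) : ∃ (k : ℕ) (v : Fin k → A), 
    ∀ a, ∃ m : ℕ, 0 < m ∧ m • a ∈ Submodule.span R (Set.range v) := by
  obtain ⟨k, j, hj⟩ := hA.1
  obtain ⟨l, v, hv, h⟩ := exists_maximal_indep (A := A) (n := k) (fun n v hv => by
    simpa using emb_rank hj hv)
  refine ⟨l, v, fun a => ?_⟩
  obtain ⟨m, hm, h⟩ := h a
  obtain ⟨h1, h2⟩ := int_to_nat_tors (S := (Submodule.span ℤ (Set.range v)).toAddSubgroup) hm h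
  exact ⟨_, h1, Submodule.span_subset_span ℤ R _ h2⟩

/-- elements killed by a power of `N` -/
def powTors (R : Type) [CommRing R] (T : Type) [AddCommGroup T] [Module R T] (N : ℕ) : Submodule R T where
  carrier := {t | ∃ n : ℕ, N ^ n • t = 0}
  zero_mem' := ⟨0, smul_zero _⟩
  add_mem' := by
    rintro a b ⟨m, hm⟩ ⟨n, hn⟩
    refine ⟨m + n, ?_⟩
    have ha : (N ^ m * N ^ n) • a = 0 := by rw [mul_comm, mul_smul, hm, smul_zero]
    have hb : (N ^ m * N ^ n) • b = 0 := by rw [mul_smul, hn, smul_zero]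
    rw [smul_add, pow_add, ha, hb, add_zero]
  smul_mem' := by
    rintro r a ⟨m, hm⟩
    exact ⟨m, by rw [smul_comm, hm, smul_zero]⟩

lemma mem_powTors {T : Type} [AddCommGroup T] [Module R T] {N : ℕ} {t : T} :
    t ∈ powTors R T N ↔ ∃ n : ℕ, N ^ n • t = 0 := Iff.rfl

def copSub (R : Type) [CommRing R] (N : ℕ) : Submonoid R where
  carrier := {r | ∃ c : ℕ, c.Coprime N ∧ (c : R) = r}
  one_mem' := ⟨1, Nat.coprime_one_left N, Nat.cast_one⟩
  mul_mem' := by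
    rintro _ _ ⟨c, hc, rfl⟩ ⟨d, hd, rfl⟩
    exact ⟨c * d, Nat.Coprime.mul_left hc hd, Nat.cast_mul _ _⟩

lemma cop_bij {N c : ℕ} (hc : c.Coprime N) (hD : ∀ d : D, ∃ n : ℕ, N ^ n • d = 0) :
    Function.Bijective (fun d : D => (c : R) • d) := by
  have bez : ∀ n : ℕ, ∃ u w : ℤ, ∀ d : D, d = u • (c • d) + w • (N ^ n • d) := by
    intro n
    have h := Nat.gcd_eq_gcd_ab c (N ^ n)
    have hc' : Nat.gcd c (N ^ n) = 1 := Nat.Coprime.pow_right n hc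
    rw [hc'] at h
    refine ⟨Nat.gcdA c (N ^ n), Nat.gcdB c (N ^ n), fun d => ?_⟩
    have h2 : ((1 : ℕ) : ℤ) • d = d := by simp
    conv_lhs => rw [← h2, h]
    rw [add_smul, mul_comm, mul_smul, mul_comm, mul_smul, natCast_zsmul, natCast_zsmul]
  constructor
  · refine (injective_iff_map_eq_zero (LinearMap.lsmul R D (c : R))).mpr ?_
    intro d hd
    obtain ⟨n, hn⟩ := hD d
    obtain ⟨u, w, h⟩ := bez n
    have hd' : c • d = 0 := by rw [← Nat.cast_smul_eq_nsmul R]; exact hd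
    rw [h d, hd', hn, smul_zero, smul_zero, add_zero]
  · intro d
    obtain ⟨n, hn⟩ := hD d
    obtain ⟨u, w, h⟩ := bez n
    refine ⟨u • d, ?_⟩
    change (c : R) • u • d = d
    rw [Nat.cast_smul_eq_nsmul, smul_comm]
    conv_rhs => rw [h d, hn, smul_zero, add_zero]

lemma ge_notpi [IsNoetherianRing R] (hA : NiceGrp π A) (hD : Good ω D) {N : ℕ} (hN : 0 < N)
    (hNπ : ∀ p : ℕ, p.Prime → p ∣ N → p ∉ π) (hDN : ∀ d : D, ∃ n : ℕ, N ^ n • d = 0) : GE ω R A D := by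
  obtain ⟨k, v, hv⟩ := exists_basis (R := R) hA
  let A0 := Submodule.span R (Set.range v)
  have hA0 : Module.Finite R A0 := Module.Finite.span_of_finite R (Set.finite_range v)
  let T := A ⧸ A0
  let T' := powTors R T N
  have hT' : Finite T' := hA.tors_finite A0.mkQ.toAddMonoidHom (Submodule.mkQ_surjective _) hN hNπ
  have g1 : GE ω R A0 D := GE.of_fg hD _
  have g2 : GE ω R T' D := GE.of_fg hD _
  have g3 : GE ω R (T ⧸ T') D := by
    refine GE.of_vanish (copSub R N) ?_ ?_
    · intro t
      obtain ⟨t, rfl⟩ := Submodule.mkQ_surjective _ t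
      obtain ⟨a, rfl⟩ := Submodule.mkQ_surjective _ t
      obtain ⟨m, hm, h⟩ := hv a
      obtain ⟨x, c, rfl, hx, hc⟩ := split_nat {p | p ∣ N} m hm
      obtain ⟨l, hl⟩ := dvd_pow_of_primes (N := N) x (Nat.pos_of_mul_pos_right hm) hx
      refine ⟨(c : R), ⟨c, ?_, rfl⟩, ?_⟩
      · refine Nat.Coprime.symm (Nat.coprime_of_dvd ?_)
        intro p hp h1 h2
        exact hc p hp h2 h1
      · rw [← map_smul, ← map_smul]
        refine (Submodule.Quotient.mk_eq_zero _).mpr ⟨l, ?_⟩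
        obtain ⟨y, hy⟩ := hl
        rw [← map_nsmul]
        refine (Submodule.Quotient.mk_eq_zero _).mpr ?_
        rw [Nat.cast_smul_eq_nsmul, ← mul_smul, hy]
        have : x * y * c = y * (x * c) := by ring
        rw [this, mul_smul, ← Nat.cast_smul_eq_nsmul R]
        exact A0.smul_mem _ h
    · rintro _ ⟨c, hc, rfl⟩
      exact cop_bij hc hDN
  have g4 : GE ω R T D := GE.contra_mid (f := T'.subtype) (g := T'.mkQ) T'.injective_subtype T'.mkQ_surjective
    (LinearMap.exact_subtype_mkQ T') g2 g3
  exact GE.contra_mid (f := A0.subtype) (g := A0.mkQ) A0.injective_subtype A0.mkQ_surjective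
    (LinearMap.exact_subtype_mkQ A0) g1 g4

end nice
end

section
section cover
variable {R : Type} [CommRing R] {ω π : Set ℕ}
variable {W X E : Type} [AddCommGroup W] [AddCommGroup X] [AddCommGroup E]
  [Module R W] [Module R X] [Module R E]

/-- Localising a nice module at `N`. -/
lemma exists_localization (hW : NiceGrp π W) {N : ℕ} (hN : 0 < N) (hNπ : ∀ p : ℕ, p.Prime → p ∣ N → p ∈ π)
    (φ : W →ₗ[R] X) (hX : Function.Bijective (fun x : X => (N : R) • x)) :
    ∃ (M : Type) (_ : AddCommGroup M) (_ : Module R M) (i : W →ₗ[R] M) (g : M →ₗ[R] X), NiceGrp π M ∧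
      (∀ w, g (i w) = φ w) ∧ ∀ m : M, ∃ m' : M, N • m' = m := by
  let S := Submonoid.powers (N : R)
  have hun : ∀ x : S, IsUnit (algebraMap R (Module.End R X) x) := by
    rintro ⟨_, n, rfl⟩
    simp only [map_pow]
    refine IsUnit.pow n ?_
    rw [Module.End.isUnit_iff]
    exact hX
  let f := LocalizedModule.mkLinearMap S W
  have hfu : Function.Bijective (fun x : LocalizedModule S W => (N : R) • x) :=
    (Module.End.isUnit_iff _).mp (IsLocalizedModule.map_units f (⟨(N : R), 1, pow_one _⟩ : S))
  have hpow : ∀ (n : ℕ) (x : LocalizedModule S W), N ^ n • x = 0 → x = 0 := by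
    intro n
    induction n with
    | zero => intro x h; simpa using h
    | succ n ih =>
      intro x h
      rw [pow_succ, mul_smul] at h
      have h2 := ih _ h
      apply hfu.1
      change (N : R) • x = (N : R) • 0
      rw [smul_zero, Nat.cast_smul_eq_nsmul]
      exact h2
  have hi : Function.Injective f := by
    refine (injective_iff_map_eq_zero f).mpr fun w hw => ?_
    obtain ⟨⟨_, n, rfl⟩, hc⟩ := (IsLocalizedModule.eq_zero_iff S f).mp hw
    have : N ^ n • w = 0 := by
      rw [← Nat.cast_smul_eq_nsmul R, Nat.cast_pow]
      exact hc
    exact hW.tf (pow_pos hN n) this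
  have htor : ∀ a : LocalizedModule S W, ∃ n : ℕ, ∃ w, f w = N ^ n • a := by
    intro a
    obtain ⟨⟨w, ⟨_, n, rfl⟩⟩, h⟩ := IsLocalizedModule.surj S f a
    refine ⟨n, w, ?_⟩
    rw [← Nat.cast_smul_eq_nsmul R, Nat.cast_pow]
    exact h.symm
  refine ⟨LocalizedModule S W, inferInstance, inferInstance, f, LocalizedModule.lift S φ hun, ?_, ?_, ?_⟩
  · refine NiceGrp.of_power f.toAddMonoidHom hi ?_ hN hNπ htor hW
    intro m hm a ha
    obtain ⟨n, w, h⟩ := htor a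
    have h1 : f (m • w) = 0 := by
      rw [map_nsmul, h, smul_comm, ha]
      exact nsmul_zero _
    have h2 : m • w = 0 := hi (by rw [h1, map_zero])
    have h3 : w = 0 := hW.tf hm h2
    rw [h3, map_zero] at h
    exact hpow n a h.symm
  · intro w
    exact congrArg (fun l => l w) (LocalizedModule.lift_comp S φ hun)
  · intro m
    obtain ⟨m', h⟩ := hfu.2 m
    exact ⟨m', by rw [← Nat.cast_smul_eq_nsmul R]; exact h⟩

def seqMod (R : Type) [CommRing R] (E : Type) [AddCommGroup E] [Module R E] (N : ℕ) : Submodule R (ℕ → E) where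
  carrier := {x | ∀ i, N • x (i + 1) = x i}
  zero_mem' := fun i => smul_zero _
  add_mem' := by
    intro a b ha hb i
    rw [Pi.add_apply, Pi.add_apply, smul_add, ha, hb]
  smul_mem' := by
    intro r a ha i
    rw [Pi.smul_apply, Pi.smul_apply, smul_comm, ha]

lemma seqMod_bij {N : ℕ} : Function.Bijective (fun x : seqMod R E N => (N : R) • x) := by
  constructor
  · refine (injective_iff_map_eq_zero (LinearMap.lsmul R (seqMod R E N) (N : R))).mpr ?_
    intro x hx
    apply Subtype.ext
    funext i
    have h : (N : R) • (x : ℕ → E) (i + 1) = 0 := congrFun (congrArg Subtype.val hx) (i + 1)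
    rw [Nat.cast_smul_eq_nsmul, x.2 i] at h
    exact h
  · intro x
    refine ⟨⟨fun i => (x : ℕ → E) (i + 1), fun i => x.2 (i + 1)⟩, ?_⟩
    apply Subtype.ext
    funext i
    change (N : R) • (x : ℕ → E) (i + 1) = (x : ℕ → E) i
    rw [Nat.cast_smul_eq_nsmul, x.2 i]

lemma exists_cover (I : Ideal R) (hI : NiceGrp π (R ⧸ I)) (hIE : ∀ r ∈ I, ∀ e : E, r • e = 0)
    {N : ℕ} (hN : 0 < N) (hNπ : ∀ p : ℕ, p.Prime → p ∣ N → p ∈ π) (hE : ∀ e : E, ∃ n : ℕ, N ^ n • e = 0)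
    (hfin : Finite (tk E N)) (hdiv : ∀ e : E, ∃ e' : E, N • e' = e) :
    ∃ (M : Type) (_ : AddCommGroup M) (_ : Module R M) (g : M →ₗ[R] E), NiceGrp π M ∧ Function.Surjective g := by
  classical
  have : Fintype (tk E N) := Fintype.ofFinite _
  choose d hd using hdiv
  let s : E → seqMod R E N := fun e => ⟨fun i => d^[i] e, fun i => by
    change N • d^[i + 1] e = d^[i] e
    rw [Function.iterate_succ_apply', hd]⟩
  let φ1 : E → ((R ⧸ I) →ₗ[R] seqMod R E N) := fun e =>
    Submodule.liftQ I (LinearMap.toSpanSingleton R (seqMod R E N) (s e)) (by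
      intro r hr
      apply Subtype.ext
      funext i
      exact hIE r hr _)
  let φ : (tk E N → R ⧸ I) →ₗ[R] seqMod R E N := LinearMap.lsum R (fun _ : tk E N => R ⧸ I) R (fun e : tk E N => φ1 e)
  have hφ : ∀ e : tk E N, φ (Pi.single e (Submodule.Quotient.mk 1)) = s e := by
    intro e
    change LinearMap.lsum R (fun _ : tk E N => R ⧸ I) R (fun e : tk E N => φ1 e) (Pi.single e (Submodule.Quotient.mk 1)) = s e
    rw [LinearMap.lsum_piSingle]
    change (1 : R) • s e = s e
    rw [one_smul]
  obtain ⟨M, _, _, i, g, hM, hgi, hMdiv⟩ := exists_localization (R := R) (NiceGrp.pi (ι := tk E N) hI) hN hNπ φ seqMod_bij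
  let ev : seqMod R E N →ₗ[R] E := (LinearMap.proj 0).comp (seqMod R E N).subtype
  refine ⟨M, _, _, ev.comp g, hM, ?_⟩
  have htk : ∀ e : E, N • e = 0 → ∃ m, ev (g m) = e := by
    intro e he
    refine ⟨i (Pi.single (⟨e, he⟩ : tk E N) (Submodule.Quotient.mk 1)), ?_⟩
    rw [hgi, hφ]
    rfl
  have key : ∀ (n : ℕ) (e : E), N ^ n • e = 0 → ∃ m, ev (g m) = e := by
    intro n
    induction n with
    | zero => intro e he; exact ⟨0, by rw [map_zero, map_zero]; simpa using he.symm⟩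
    | succ n ih =>
      intro e he
      obtain ⟨m, hm⟩ := ih (N • e) (by rw [← mul_smul, ← pow_succ]; exact he)
      obtain ⟨m', rfl⟩ := hMdiv m
      obtain ⟨m2, h2⟩ := htk (e - ev (g m')) (by
        rw [smul_sub, ← hm, map_nsmul, map_nsmul, sub_self])
      exact ⟨m2 + m', by rw [map_add, map_add, h2, sub_add_cancel]⟩
  intro e
  obtain ⟨n, hn⟩ := hE e
  exact key n e hn

/-- `R/Ann(A)` is nice when `A` is. -/
lemma nice_quot_ann {A : Type} [AddCommGroup A] [Module R A] (hA : NiceGrp π A) :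
    NiceGrp π (R ⧸ Module.annihilator R A) := by
  obtain ⟨k, v, hv⟩ := exists_basis (R := R) hA
  let f : R →ₗ[R] (Fin k → A) := LinearMap.pi fun i => LinearMap.toSpanSingleton R A (v i)
  have hle : Module.annihilator R A ≤ LinearMap.ker f := by
    intro r hr
    rw [LinearMap.mem_ker]
    funext i
    exact Module.mem_annihilator.mp hr (v i)
  refine NiceGrp.of_inj (Submodule.liftQ _ f hle).toAddMonoidHom ?_ (NiceGrp.pi (ι := Fin k) hA)
  refine (injective_iff_map_eq_zero _).mpr fun x hx => ?_
  obtain ⟨r, rfl⟩ := Submodule.mkQ_surjective _ x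
  have hx' : f r = 0 := hx
  refine (Submodule.Quotient.mk_eq_zero _).mpr ?_
  refine Module.mem_annihilator.mpr fun a => ?_
  obtain ⟨m, hm, h⟩ := hv a
  have hs : ∀ b ∈ Submodule.span R (Set.range v), r • b = 0 := by
    intro b hb
    have hle2 : Submodule.span R (Set.range v) ≤ LinearMap.ker (LinearMap.lsmul R A r) := by
      rw [Submodule.span_le]
      rintro _ ⟨i, rfl⟩
      exact congrFun hx' i
    exact hle2 hb
  refine hA.tf hm ?_
  rw [smul_comm]
  exact hs _ h

end cover
end

section
section main
variable {R : Type} [CommRing R] {ω π : Set ℕ}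

/-- every common quotient of `B` and of a nice module is finite -/
def HQ (π : Set ℕ) (R : Type) [CommRing R] (B : Type) [AddCommGroup B] [Module R B] : Prop :=
  ∀ (C M : Type) [AddCommGroup C] [AddCommGroup M] [Module R C] [Module R M] (f : B →ₗ[R] C) (g : M →ₗ[R] C),
    Function.Surjective f → Function.Surjective g → NiceGrp π M → Finite C

variable {A B C D X : Type} [AddCommGroup A] [AddCommGroup B] [AddCommGroup C] [AddCommGroup D] [AddCommGroup X]
  [Module R A] [Module R B] [Module R C] [Module R D] [Module R X]

lemma HQ.of_surj (h : HQ π R B) (q : B →ₗ[R] D) (hq : Function.Surjective q) : HQ π R D := by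
  intro C M _ _ _ _ f g hf hg hM
  exact h C M (f.comp q) g (hf.comp hq) hg hM

lemma ann_smul_top (hA : NiceGrp π A) (hD : Good ω D) (hQ : HQ π R D) (hdiv : IsDivGrp D) {N : ℕ} (hN : 0 < N)
    (hNπ : ∀ p : ℕ, p.Prime → p ∣ N → p ∈ π) (hDN : ∀ d : D, ∃ n : ℕ, N ^ n • d = 0) :
    Module.annihilator R A • (⊤ : Submodule R D) = ⊤ := by
  let J := Module.annihilator R A • (⊤ : Submodule R D)
  have hE : Good ω (D ⧸ J) := Good.of_surj J.mkQ.toAddMonoidHom J.mkQ_surjective hD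
  have := hE.1
  have hdivE : IsDivGrp (D ⧸ J) := by
    intro m hm x
    obtain ⟨x, rfl⟩ := J.mkQ_surjective x
    obtain ⟨y, rfl⟩ := hdiv m hm x
    exact ⟨J.mkQ y, (map_nsmul _ _ _).symm⟩
  obtain ⟨M, _, _, g, hM, hg⟩ := exists_cover (E := D ⧸ J) (Module.annihilator R A) (nice_quot_ann hA)
    (by
      intro r hr e
      obtain ⟨x, rfl⟩ := J.mkQ_surjective e
      rw [← map_smul]
      exact (Submodule.Quotient.mk_eq_zero _).mpr (Submodule.smul_mem_smul hr trivial)) hN hNπ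
    (by
      intro e
      obtain ⟨x, rfl⟩ := J.mkQ_surjective e
      obtain ⟨n, hn⟩ := hDN x
      exact ⟨n, by rw [← map_nsmul, hn, map_zero]⟩) (tk_finite hN) (hdivE N hN)
  have hfin : Finite (D ⧸ J) := hQ _ M J.mkQ g J.mkQ_surjective hg hM
  rw [eq_top_iff]
  intro x _
  obtain ⟨y, hy⟩ := hdivE (Nat.card (D ⧸ J)) Nat.card_pos (J.mkQ x)
  rw [card_nsmul_eq_zero'] at hy
  exact (Submodule.Quotient.mk_eq_zero _).mp hy.symm

lemma exists_stable [IsArtinian ℤ D] (a : R) : ∃ n : ℕ, ∀ x : D, ∃ y : D, a ^ n • x = a • a ^ n • y := by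
  have : IsArtinian R D := isArtinian_of_tower ℤ inferInstance
  let f : ℕ →o (Submodule R D)ᵒᵈ :=
    ⟨fun n => OrderDual.toDual (LinearMap.range (LinearMap.lsmul R D (a ^ n))), by
      intro m n hmn
      change LinearMap.range (LinearMap.lsmul R D (a ^ n)) ≤ LinearMap.range (LinearMap.lsmul R D (a ^ m))
      rintro _ ⟨x, rfl⟩
      refine ⟨a ^ (n - m) • x, ?_⟩
      change a ^ m • a ^ (n - m) • x = a ^ n • x
      rw [← mul_smul, ← pow_add, Nat.add_sub_cancel' hmn]⟩
  obtain ⟨n, hn⟩ := IsArtinian.monotone_stabilizes f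
  refine ⟨n, fun x => ?_⟩
  have h : LinearMap.range (LinearMap.lsmul R D (a ^ n)) = LinearMap.range (LinearMap.lsmul R D (a ^ (n + 1))) :=
    hn (n + 1) (Nat.le_succ n)
  have hx : a ^ n • x ∈ LinearMap.range (LinearMap.lsmul R D (a ^ n)) := ⟨x, rfl⟩
  rw [h] at hx
  obtain ⟨y, hy⟩ := hx
  refine ⟨y, ?_⟩
  rw [← hy]
  change a ^ (n + 1) • y = _
  rw [pow_succ', mul_smul]

lemma ge_list [IsNoetherianRing R] (hA : NiceGrp π A) (l : List R) (hl : ∀ a ∈ l, a ∈ Module.annihilator R A) :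
    ∀ (D : Type) [AddCommGroup D] [Module R D], Good ω D →
      (∀ (D' : Type) [AddCommGroup D'] [Module R D'] (q : D →ₗ[R] D'), Function.Surjective q →
        (∀ a ∈ l, ∃ n : ℕ, ∀ x : D', a ^ n • x = 0) → GE ω R A D') → GE ω R A D := by
  induction l with
  | nil =>
    intro D _ _ hD H
    exact H D LinearMap.id Function.surjective_id (by simp)
  | cons a l ih =>
    intro D _ _ hD H
    refine ih (fun b hb => hl b (List.mem_cons_of_mem _ hb)) D hD ?_
    intro D' _ _ q hq hn
    have hD' : Good ω D' := Good.of_surj q.toAddMonoidHom hq hD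
    have := hD'.1
    obtain ⟨n, hst⟩ := exists_stable (D := D') a
    let J := LinearMap.range (LinearMap.lsmul R D' (a ^ n))
    have hJ : Good ω J := Good.of_inj J.subtype.toAddMonoidHom J.injective_subtype hD'
    have := hJ.1
    have hsurj : Function.Surjective (LinearMap.lsmul R J a) := by
      rintro ⟨_, x, rfl⟩
      obtain ⟨y, hy⟩ := hst x
      exact ⟨⟨a ^ n • y, y, rfl⟩, Subtype.ext hy.symm⟩
    have hkf : Finite (LinearMap.ker (LinearMap.lsmul R J a)) :=
      ker_finite_of_surj (LinearMap.lsmul R J a).toAddMonoidHom hsurj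
    have hK : Good ω (LinearMap.ker (LinearMap.lsmul R J a)) :=
      Good.of_inj (Submodule.subtype _).toAddMonoidHom (Submodule.injective_subtype _) hJ
    have g1 : GE ω R A J := by
      refine GE.of_kernel a hsurj (fun x => Module.mem_annihilator.mp (hl a List.mem_cons_self) x)
        (LinearMap.ker (LinearMap.lsmul R J a)).subtype (Submodule.injective_subtype _) (fun x => ?_) (ge_finite hA hK)
      constructor
      · intro h; exact ⟨⟨x, h⟩, rfl⟩
      · rintro ⟨c, rfl⟩; exact c.2
    have g2 : GE ω R A (D' ⧸ J) := by
      refine H (D' ⧸ J) (J.mkQ.comp q) (J.mkQ_surjective.comp hq) ?_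
      intro b hb
      rcases List.mem_cons.mp hb with rfl | hb
      · refine ⟨n, fun x => ?_⟩
        obtain ⟨x, rfl⟩ := J.mkQ_surjective x
        rw [← map_smul]
        exact (Submodule.Quotient.mk_eq_zero _).mpr ⟨x, rfl⟩
      · obtain ⟨k, hk⟩ := hn b hb
        refine ⟨k, fun x => ?_⟩
        obtain ⟨x, rfl⟩ := J.mkQ_surjective x
        rw [← map_smul, hk, map_zero]
    exact GE.co_mid (f := J.subtype) (g := J.mkQ) J.injective_subtype J.mkQ_surjective
      (LinearMap.exact_subtype_mkQ J) g1 g2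

lemma ge_pi_div [IsNoetherianRing R] (hA : NiceGrp π A) (hD : Good ω D) (hQ : HQ π R D) (hdiv : IsDivGrp D) {N : ℕ} (hN : 0 < N)
    (hNπ : ∀ p : ℕ, p.Prime → p ∣ N → p ∈ π) (hDN : ∀ d : D, ∃ n : ℕ, N ^ n • d = 0) : GE ω R A D := by
  obtain ⟨s, hs⟩ := (isNoetherianRing_iff_ideal_fg R).mp inferInstance (Module.annihilator R A)
  refine ge_list hA s.toList (fun a ha => ?_) D hD ?_
  · rw [← hs]; exact Submodule.subset_span (Finset.mem_toList.mp ha)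
  intro D' _ _ q hq hn
  have hD' : Good ω D' := Good.of_surj q.toAddMonoidHom hq hD
  have htop := ann_smul_top hA hD' (hQ.of_surj q hq) (by
    intro m hm x
    obtain ⟨x, rfl⟩ := hq x
    obtain ⟨y, rfl⟩ := hdiv m hm x
    exact ⟨q y, (map_nsmul _ _ _).symm⟩) hN hNπ (by
      intro e
      obtain ⟨x, rfl⟩ := hq e
      obtain ⟨n, hn⟩ := hDN x
      exact ⟨n, by rw [← map_nsmul, hn, map_zero]⟩)
  have hrad : Module.annihilator R A ≤ (Module.annihilator R D').radical := by
    rw [← hs]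
    refine Submodule.span_le.mpr fun a ha => ?_
    obtain ⟨n, hn⟩ := hn a (Finset.mem_toList.mpr ha)
    exact ⟨n, Module.mem_annihilator.mpr hn⟩
  obtain ⟨k, hk⟩ := Ideal.exists_pow_le_of_le_radical_of_fg hrad ⟨s, hs⟩
  have hpow : ∀ k : ℕ, (Module.annihilator R A) ^ k • (⊤ : Submodule R D') = ⊤ := by
    intro k
    induction k with
    | zero => rw [pow_zero, Ideal.one_eq_top, Submodule.top_smul]
    | succ k ih => rw [pow_succ, mul_smul, htop, ih]
  have hsub : Subsingleton D' := by
    refine subsingleton_of_forall_eq 0 fun x => ?_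
    have hx : x ∈ (Module.annihilator R A) ^ k • (⊤ : Submodule R D') := by rw [hpow]; trivial
    have hle : (Module.annihilator R A) ^ k • (⊤ : Submodule R D') ≤ ⊥ := by
      rw [Submodule.smul_le]
      intro r hr n _
      exact (Submodule.mem_bot R).mpr (Module.mem_annihilator.mp (hk hr) n)
    exact (Submodule.mem_bot R).mp (hle hx)
  exact ge_finite hA hD'

lemma ge_pi [IsNoetherianRing R] (hA : NiceGrp π A) (hC : Good ω C) (hQ : HQ π R C) {N : ℕ} (hN : 0 < N)
    (hNπ : ∀ p : ℕ, p.Prime → p ∣ N → p ∈ π) (hCN : ∀ d : C, ∃ n : ℕ, N ^ n • d = 0) : GE ω R A C := by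
  have := hC.1
  obtain ⟨m, hm, hdiv⟩ := exists_mul_div (A := C)
  let J := LinearMap.range (LinearMap.lsmul R C (m : R))
  have hJ : Good ω J := Good.of_inj J.subtype.toAddMonoidHom J.injective_subtype hC
  have hCJ : Good ω (C ⧸ J) := Good.of_surj J.mkQ.toAddMonoidHom J.mkQ_surjective hC
  have hfin : Finite (C ⧸ J) := by
    have := hCJ.1
    refine finite_of_artinian_bounded hm fun x => ?_
    obtain ⟨x, rfl⟩ := J.mkQ_surjective x
    rw [← map_nsmul]
    refine (Submodule.Quotient.mk_eq_zero _).mpr ⟨x, ?_⟩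
    change (m : R) • x = m • x
    rw [Nat.cast_smul_eq_nsmul]
  have g1 : GE ω R A J := by
    refine ge_pi_div hA hJ (hQ.of_surj (LinearMap.lsmul R C (m : R)).rangeRestrict
      (LinearMap.surjective_rangeRestrict _)) ?_ hN hNπ ?_
    · rintro k hk ⟨_, x, rfl⟩
      obtain ⟨y, hy⟩ := hdiv k hk x
      refine ⟨⟨_, y, rfl⟩, Subtype.ext ?_⟩
      change k • ((m : R) • y) = (m : R) • x
      rw [Nat.cast_smul_eq_nsmul, Nat.cast_smul_eq_nsmul]
      exact hy
    · intro d
      obtain ⟨n, hn⟩ := hCN d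
      exact ⟨n, Subtype.ext hn⟩
  exact GE.co_mid (f := J.subtype) (g := J.mkQ) J.injective_subtype J.mkQ_surjective
    (LinearMap.exact_subtype_mkQ J) g1 (ge_finite hA hCJ)

lemma ge_nice [IsNoetherianRing R] (hA : NiceGrp π A) (hB : Good ω B) (hQ : HQ π R B) : GE ω R A B := by
  have := hB.1
  obtain ⟨N, hN, hBN⟩ := exists_exponent (B := B)
  obtain ⟨N1, N2, rfl, h1, h2⟩ := split_nat π N hN
  have hN1 := Nat.pos_of_mul_pos_right hN
  have hN2 := Nat.pos_of_mul_pos_left hN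
  let J := powTors R B N2
  have hJ : Good ω J := Good.of_inj J.subtype.toAddMonoidHom J.injective_subtype hB
  have hBJ : Good ω (B ⧸ J) := Good.of_surj J.mkQ.toAddMonoidHom J.mkQ_surjective hB
  refine GE.co_mid (f := J.subtype) (g := J.mkQ) J.injective_subtype J.mkQ_surjective
    (LinearMap.exact_subtype_mkQ J) (ge_notpi hA hJ hN2 h2 ?_)
      (ge_pi hA hBJ (hQ.of_surj J.mkQ J.mkQ_surjective) hN1 h1 ?_)
  · rintro ⟨d, n, hn⟩
    exact ⟨n, Subtype.ext hn⟩
  · intro d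
    obtain ⟨x, rfl⟩ := J.mkQ_surjective d
    obtain ⟨n, hn⟩ := hBN x
    refine ⟨n, ?_⟩
    rw [← map_nsmul]
    refine (Submodule.Quotient.mk_eq_zero _).mpr ⟨n, ?_⟩
    rw [← mul_smul, ← mul_pow, mul_comm N2 N1]
    exact hn

/-- The class of modules all of whose quotients have good Ext groups. -/
def QG (ω : Set ℕ) (R : Type) [CommRing R] (B : Type) [AddCommGroup B] [Module R B]
    (A : Type) [AddCommGroup A] [Module R A] : Prop :=
  ∀ (X : Type) [AddCommGroup X] [Module R X] (q : A →ₗ[R] X), Function.Surjective q → GE ω R X B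

lemma QG.ge (h : QG ω R B A) : GE ω R A B := h A LinearMap.id Function.surjective_id

lemma QG.of_finite [IsNoetherianRing R] (hB : Good ω B) [Finite A] : QG ω R B A := by
  intro X _ _ q hq
  have : Finite X := Finite.of_surjective q hq
  exact GE.of_fg hB X

lemma QG.of_nice [IsNoetherianRing R] (hA : NiceGrp π A) (hB : Good ω B) (hQ : HQ π R B) : QG ω R B A := by
  intro X _ _ q hq
  have hK : NiceGrp π (LinearMap.ker q) :=
    NiceGrp.of_inj (LinearMap.ker q).subtype.toAddMonoidHom (Submodule.injective_subtype _) hA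
  exact GE.contra_right (f := (LinearMap.ker q).subtype) (g := q) (Submodule.injective_subtype _) hq
    (LinearMap.exact_subtype_ker_map q) (ge_nice hK hB hQ) (ge_nice hA hB hQ)

lemma QG.of_quot (f : A →ₗ[R] C) (hf : Function.Surjective f) (h : QG ω R B A) : QG ω R B C := by
  intro X _ _ q hq
  exact h X (q.comp f) (hq.comp hf)

lemma QG.of_ext (f : A →ₗ[R] D) (g : D →ₗ[R] C) (hg : Function.Surjective g)
    (hfg : ∀ b, g b = 0 → ∃ a, f a = b) (hA : QG ω R B A) (hC : QG ω R B C) : QG ω R B D := by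
  intro X _ _ q hq
  let J := LinearMap.range (q.comp f)
  have g1 : GE ω R J B := hA J (q.comp f).rangeRestrict (LinearMap.surjective_rangeRestrict _)
  have hker : LinearMap.ker g ≤ LinearMap.ker (J.mkQ.comp q) := by
    intro d hd
    obtain ⟨a, rfl⟩ := hfg d hd
    exact (Submodule.Quotient.mk_eq_zero _).mpr ⟨a, rfl⟩
  have g0 : QG ω R B (D ⧸ LinearMap.ker g) :=
    hC.of_quot (g.quotKerEquivOfSurjective hg).symm.toLinearMap (LinearEquiv.surjective _)
  have g2 : GE ω R (X ⧸ J) B := g0 (X ⧸ J) (Submodule.liftQ _ (J.mkQ.comp q) hker) (by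
    intro x
    obtain ⟨d, rfl⟩ := (J.mkQ_surjective.comp hq) x
    exact ⟨Submodule.Quotient.mk d, rfl⟩)
  exact GE.contra_mid (f := J.subtype) (g := J.mkQ) J.injective_subtype J.mkQ_surjective
    (LinearMap.exact_subtype_mkQ J) g1 g2

end main
end

section
lemma Good.subquot {ω : Set ℕ} {Z E H : Type*} [AddCommGroup Z] [AddCommGroup E] [AddCommGroup H] (φ : Z →+ E) (ψ : Z →+ H)
    (hψ : Function.Surjective ψ) (h : ∀ z, φ z = 0 → ψ z = 0) (hE : Good ω E) : Good ω H := by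
  have h1 : Good ω (Z ⧸ φ.ker) := Good.of_inj (QuotientAddGroup.kerLift φ) (QuotientAddGroup.kerLift_injective φ) hE
  refine Good.of_surj (QuotientAddGroup.lift φ.ker ψ h) ?_ h1
  intro y
  obtain ⟨z, rfl⟩ := hψ y
  exact ⟨(z : Z ⧸ φ.ker), rfl⟩

section transfer
open CochainComplex.HomComplex Limits

universe w v u
variable {C : Type u} [Category.{v} C] [Abelian C] [HasExt.{w} C]

lemma extMk_zero_inj {X Y : C} (P : ProjectiveResolution X) (f : P.complex.X 0 ⟶ Y)
    (hf : P.complex.d 1 0 ≫ f = 0) (h : P.extMk f 1 rfl hf = 0) : f = 0 := by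
  simp only [← P.extEquivCohomologyClass.apply_eq_iff_eq,
    ProjectiveResolution.extEquivCohomologyClass_extMk, ProjectiveResolution.extEquivCohomologyClass_zero,
    CohomologyClass.mk_eq_zero_iff] at h
  rw [Cocycle.toSingleMk_mem_coboundaries_iff _ _ _ _ _ 1 (by simp)] at h
  obtain ⟨g, hg⟩ := h
  have hz : IsZero (P.cochainComplex.X 1) := CochainComplex.isZero_of_isStrictlyLE _ 0 1 (by norm_num)
  rw [hz.eq_of_src g 0, comp_zero] at hg
  rw [← cancel_epi (P.cochainComplexXIso (-(0 : ℕ)) 0 rfl).hom, ← hg, comp_zero]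

lemma good_old_of_new [Linear ℤ C] [EnoughProjectives C] {ω : Set ℕ} (X Y : C) (n : ℕ)
    (h : Good ω (Abelian.Ext X Y n)) : Good ω (((Ext ℤ C n).obj (Opposite.op X)).obj Y) := by
  let P : ProjectiveResolution X := projectiveResolution X
  let K := P.complex.linearYonedaObj ℤ Y
  have e := P.isoExt (R := ℤ) n Y
  suffices hH : Good ω (K.homology n) from
    Good.of_surj (e.inv.hom.toAddMonoidHom) ((ModuleCat.epi_iff_surjective e.inv).mp inferInstance) hH
  let ι : K.cycles n →+ (P.complex.X n ⟶ Y) := (K.iCycles n).hom.toAddMonoidHom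
  have hι : Function.Injective ι := (ModuleCat.mono_iff_injective (K.iCycles n)).mp inferInstance
  have hcyc : ∀ z, P.complex.d (n + 1) n ≫ ι z = 0 := fun z =>
    congrArg (fun l => l.hom z) (K.iCycles_d n (n + 1))
  let φ : K.cycles n →+ Abelian.Ext X Y n := AddMonoidHom.mk' (fun z => P.extMk (ι z) (n + 1) rfl (hcyc z)) (by
    intro a b
    rw [P.add_extMk]
    congr 1
    exact map_add ι a b)
  refine Good.subquot φ (K.homologyπ n).hom.toAddMonoidHom ((ModuleCat.epi_iff_surjective (K.homologyπ n)).mp inferInstance) ?_ h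
  intro z hz
  have hz' : P.extMk (ι z) (n + 1) rfl (hcyc z) = 0 := hz
  cases n with
  | zero =>
    have h0 : ι z = 0 := extMk_zero_inj P _ _ hz'
    have : z = 0 := hι (by rw [h0, map_zero])
    rw [this, map_zero]
  | succ n =>
    obtain ⟨g, hg⟩ := (P.extMk_eq_zero_iff _ _ _ _ n rfl).mp hz'
    have h1 : ι ((K.toCycles n (n + 1)).hom g) = P.complex.d (n + 1) n ≫ g :=
      congrArg (fun l => l.hom g) (K.toCycles_i n (n + 1))
    have h2 : z = (K.toCycles n (n + 1)).hom g := hι (by rw [h1]; exact hg.symm)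
    rw [h2]
    exact congrArg (fun l => l.hom g) (K.toCycles_comp_homologyπ n (n + 1))

end transfer
end

section
section final
variable {G : Type} [CommGroup G]

/-- The group ring. -/
abbrev ZG (G : Type) [CommGroup G] : Type := MonoidAlgebra ℤ G

/-- The module over the group ring given by a representation. -/
abbrev RM (A : Rep.{0} ℤ G) : Type := (Rep.toModuleMonoidAlgebra.{0}.obj A : ModuleCat (ZG G))

def repLin {A B : Rep.{0} ℤ G} (f : A ⟶ B) : (RM A) →ₗ[ZG G] (RM B) :=
  (Rep.toModuleMonoidAlgebra.map f).hom

lemma repLin_apply {A B : Rep.{0} ℤ G} (f : A ⟶ B) (a : A) : repLin f a = f.hom a := rfl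

lemma zg_noetherian (hfg : Group.FG G) : IsNoetherianRing (ZG G) := by
  have : Monoid.FG G := Group.fg_iff_monoid_fg.mp hfg
  have : Algebra.FiniteType ℤ (ZG G) := inferInstance
  exact Algebra.FiniteType.isNoetherianRing ℤ (ZG G)

lemma good_rep_of_ge {ω : Set ℕ} (A B : Rep.{0} ℤ G) (h : GE ω (ZG G) (RM A) (RM B)) (n : ℕ) :
    Good ω (((Ext ℤ (Rep.{0} ℤ G) n).obj (Opposite.op A)).obj B) := by
  letI : HasExt.{1} (Rep.{0} ℤ G) := HasExt.standard _
  let F := Rep.toModuleMonoidAlgebra.{0} (k := ℤ) (G := G)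
  have : F.Additive := Functor.additive_of_preserves_binary_products F
  have : F.PreservesProjectiveObjects := ⟨fun hX => (Rep.equivalenceModuleMonoidAlgebra (k := ℤ) (G := G)).map_projective_iff _ |>.mpr hX⟩
  have hb := Functor.mapExt_bijective_of_preservesProjectiveObjects F A B n
  exact good_old_of_new A B n (Good.of_inj (F.mapExtAddHom A B n) hb.1 (h n))

lemma niceRep_iff {π : Set ℕ} {M : Rep.{0} ℤ G} : NiceRep π M ↔ NiceGrp π M := niceGrp_iff.symm

lemma hq_of_rep {π : Set ℕ} {B : Rep.{0} ℤ G}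
    (hquot : ¬ ∃ (C : Rep ℤ G) (f : B ⟶ C) (M : Rep ℤ G) (g : M ⟶ C),
      Infinite (C : Type) ∧ Function.Surjective f.hom ∧ NiceRep π M ∧
        Function.Surjective g.hom) : HQ π (ZG G) (RM B) := by
  intro C M _ _ _ _ f g hf hg hM
  by_contra hC
  let U := Rep.ofModuleMonoidAlgebra.{0} (k := ℤ) (G := G)
  refine hquot ⟨U.obj (ModuleCat.of (ZG G) C), (Rep.unitIso B).hom ≫ U.map (ModuleCat.ofHom f),
    U.obj (ModuleCat.of (ZG G) M), U.map (ModuleCat.ofHom g), not_finite_iff_infinite.mp hC, ?_, ?_, ?_⟩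
  · exact hf
  · exact niceRep_iff.mpr hM
  · exact hg

lemma qg_of_memC (hfg : Group.FG G) {π ω : Set ℕ} {B : Rep.{0} ℤ G} (hB : Good ω B) (hQ : HQ π (ZG G) (RM B))
    {A : Rep.{0} ℤ G} (hA : MemC G π A) : QG ω (ZG G) (RM B) (RM A) := by
  have := zg_noetherian hfg
  have hB' : Good ω (RM B) := hB
  induction hA with
  | of_finite A h =>
    have : Finite (RM A) := h
    exact QG.of_finite hB'
  | of_nice A h => exact QG.of_nice (A := (RM A)) (niceRep_iff.mp h) hB' hQ
  | quot A B f hf hA ih => exact ih.of_quot (repLin f) hf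
  | ext A B C f g hinj hsurj hexact hA hC ihA ihC =>
    exact QG.of_ext (repLin f) (repLin g) hsurj (fun b hb => (hexact b).mp hb) ihA ihC

end final
end

/-- Let `π` be a set of primes and `G` a finitely generated abelian group.  Let
`B` be a `ℤG`-module whose underlying additive group is a Černikov `ω`-group,
and suppose that no infinite `ℤG`-module quotient of `B` is also a quotient of a
`ℤG`-module whose underlying abelian group is torsion-free of finite rank and
`π`-spectral.  If `A` is a `ℤG`-module in `𝔠(G, π)`, then `Ext^n_{ℤG}(A, B)` is
a Černikov `ω`-group for all `n ≥ 0`. -/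
theorem ext_cernikov_of_memC (G : Type) [CommGroup G] (hfg : Group.FG G)
    (π ω : Set ℕ) (B : Rep ℤ G) (hB : IsCernikovOmega ω (B : Type))
    (hquot : ¬ ∃ (C : Rep ℤ G) (f : B ⟶ C) (M : Rep ℤ G) (g : M ⟶ C),
      Infinite (C : Type) ∧ Function.Surjective f.hom ∧ NiceRep π M ∧
        Function.Surjective g.hom)
    (A : Rep ℤ G) (hA : MemC G π A) (n : ℕ) :
    IsCernikovOmega ω (((Ext ℤ (Rep ℤ G) n).obj (Opposite.op A)).obj B) := by
  exact good_iff.mp (good_rep_of_ge A B (qg_of_memC hfg (good_iff.mpr hB) (hq_of_rep hquot) hA).ge n)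
end
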